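/- arXiv:2005.11956 — 2 statements merged into one kernel-verified Lean document; each statement's English description precedes it below -/
import Mathlib

section
/- Let p_1,…,p_m ∈ ℕ with each p_i ≥ 2 and Σ_{i=1}^m 1/p_i < m−1. Then a_n(Γ_{p_1,…,p_m}) ∼ a_n(C_{p_1} * ⋯ * C_{p_m}) as n → ∞; that is, the number of index n subgroups of Γ_{p_1,…,p_m} is asymptotically equal to the number of index n subgroups of the free product C_{p_1} * ⋯ * C_{p_m}. -/
open Filter Topology Asymptotics
open scoped TensorProduct

/-- `a_n(G)`: the number of index `n` subgroups of `G`. -/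
noncomputable def subgroupCount (G : Type*) [Group G] (n : ℕ) : ℕ :=
  Nat.card {H : Subgroup G // H.index = n}

/-- the relations `x_i ^ p_i = x_j ^ p_j` defining `Γ_{p_1,…,p_m}` -/
def torusRels (m : ℕ) (p : Fin m → ℕ) : Set (FreeGroup (Fin m)) :=
  {w : FreeGroup (Fin m) | ∃ i j : Fin m, w = FreeGroup.of i ^ p i * (FreeGroup.of j ^ p j)⁻¹}

/-- the group `Γ_{p_1,…,p_m} = ⟨x_1,…,x_m ∣ x_1^{p_1} = ⋯ = x_m^{p_m}⟩` -/
abbrev TorusKnotGroup (m : ℕ) (p : Fin m → ℕ) : Type :=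
  PresentedGroup (torusRels m p)

/-- the relations `x_i ^ p_i = 1` defining `C_{p_1} * ⋯ * C_{p_m}` -/
def cyclicRels (m : ℕ) (p : Fin m → ℕ) : Set (FreeGroup (Fin m)) :=
  {w : FreeGroup (Fin m) | ∃ i : Fin m, w = FreeGroup.of i ^ p i}

/-- the free product `C_{p_1} * ⋯ * C_{p_m}` of cyclic groups of orders `p_1, …, p_m`,
presented as `⟨x_1,…,x_m ∣ x_1^{p_1} = ⋯ = x_m^{p_m} = 1⟩`. -/
abbrev CyclicFreeProduct (m : ℕ) (p : Fin m → ℕ) : Type :=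
  PresentedGroup (cyclicRels m p)

/-!
The common power `z` of the generators is central in `Γ` and `Γ / ⟨z⟩ = C := C_{p_1} * ⋯ * C_{p_m}`.
A subgroup `H` of index `n` in `Γ` is determined by its image `L` in `C`, whose index `k` divides
`n`, and by a homomorphism with kernel `H` from the preimage of `L` onto the cyclic group of order
`n / k`; hence `a_n(C) ≤ a_n(Γ) ≤ ∑ k ∣ n, (n / k) ^ (k * rank Γ) * a_k(C)`.

With `χ = ∑ i, (1 - 1 / p_i) - 1 > 0` one has `a_n(C) = exp (χ n log n + O(n))`, so the terms with
`k ≤ n / 2` are negligible. Homomorphisms `C → S_n` are tuples of roots of `1` in `S_n`, and the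
number of solutions of `τ ^ p = 1` in `S_n` is `exp ((1 - 1 / p) n log n + O(n))`: this bounds
`a_n(C)` from above. For the lower bound, fix a transitive tuple `σ` (a skeleton) with `σ i` a
product of `c i` disjoint `p_i`-cycles and `∑ i, (p_i - 1) * c i = n + O(1)`, and multiply each
`σ i` by an arbitrary `p_i`-th root of `1` supported on its fixed points. The point stabilizers of
these actions are pairwise distinct because a fixed set of words moves the base point to every other
point in all of them.
-/

section PermutationRepresentations

open Equiv MulAction

variable {G : Type*} [Group G]

lemma exists_injective_monoidHom_to_pi [Group.FG G] (A : Type*) [Group A] :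
    ∃ f : (G →* A) → Fin (Group.rank G) → A, Function.Injective f := by
  obtain ⟨S, hcard, hgen⟩ := Group.rank_spec G
  let e : Fin (Group.rank G) ≃ S := (finCongr hcard.symm).trans S.equivFin.symm
  refine ⟨fun φ i => φ (e i), fun φ ψ hφψ => MonoidHom.eq_of_eqOn_dense hgen fun s hs => ?_⟩
  simpa using congrFun hφψ (e.symm ⟨s, hs⟩)

instance finite_monoidHom [Group.FG G] (A : Type*) [Group A] [Finite A] : Finite (G →* A) :=
  let ⟨f, hf⟩ := exists_injective_monoidHom_to_pi (G := G) A
  Finite.of_injective f hf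

lemma card_monoidHom_le [Group.FG G] (A : Type*) [Group A] [Finite A] :
    Nat.card (G →* A) ≤ Nat.card A ^ Group.rank G := by
  obtain ⟨f, hf⟩ := exists_injective_monoidHom_to_pi (G := G) A
  simpa [Nat.card_fun] using Nat.card_le_card_of_injective f hf

lemma index_comap_stabilizer {α : Type*} (φ : G →* Perm α) (r : α) (hφ : ∀ a, ∃ g, φ g r = a) :
    ((stabilizer (Perm α) r).comap φ).index = Nat.card α := by
  let := MulAction.compHom α φ
  have : IsPretransitive G α := (isPretransitive_iff_base r).2 hφ
  exact index_stabilizer_of_transitive G r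

lemma eq_of_comap_stabilizer_eq {α : Type*} {φ ψ : G →* Perm α} {r : α}
    (hcommon : ∀ a, ∃ g, φ g r = a ∧ ψ g r = a)
    (hstab : (stabilizer (Perm α) r).comap φ = (stabilizer (Perm α) r).comap ψ) : φ = ψ := by
  ext g a
  obtain ⟨u, hφu, hψu⟩ := hcommon a
  obtain ⟨v, hφv, hψv⟩ := hcommon (φ g a)
  have hmem : v⁻¹ * g * u ∈ (stabilizer (Perm α) r).comap φ := by
    simp [mem_stabilizer_iff, hφu, Equiv.symm_apply_eq, hφv]
  rw [hstab] at hmem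
  have hψ : ψ g a = ψ v r := by
    simpa [mem_stabilizer_iff, hψu, Equiv.symm_apply_eq] using hmem
  rw [hψ, hψv]

/-- The action of `G` on the cosets of `H`, transported to a labelling `e` of the cosets. -/
def cosetAction {α : Type*} (H : Subgroup G) (e : G ⧸ H ≃ α) : G →* Perm α :=
  e.permCongrHom.toMonoidHom.comp (toPermHom G (G ⧸ H))

lemma cosetAction_apply_one {α : Type*} (H : Subgroup G) (e : G ⧸ H ≃ α) (g : G) :
    cosetAction H e g (e (1 : G)) = e g := by
  simp [cosetAction]

lemma comap_stabilizer_cosetAction {α : Type*} (H : Subgroup G) (e : G ⧸ H ≃ α) :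
    (stabilizer (Perm α) (e (1 : G))).comap (cosetAction H e) = H := by
  ext g
  rw [Subgroup.mem_comap, mem_stabilizer_iff, Perm.smul_def, cosetAction_apply_one,
    e.apply_eq_iff_eq, eq_comm, QuotientGroup.eq]
  simp

lemma cosetAction_prod_injective (α : Type*) (P : Subgroup G → Prop) :
    Function.Injective fun x : Σ H : {H : Subgroup G // P H}, G ⧸ H.1 ≃ α =>
      (cosetAction x.1.1 x.2, x.2 (1 : G)) := by
  rintro ⟨⟨H, hH⟩, e⟩ ⟨⟨H', hH'⟩, e'⟩ heq
  obtain ⟨hφ, hr⟩ := Prod.mk.inj heq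
  simp only at hφ hr
  obtain rfl : H = H' := by
    rw [← comap_stabilizer_cosetAction H e, ← comap_stabilizer_cosetAction H' e', hφ, hr]
  congr 1
  ext x
  induction x using QuotientGroup.induction_on with
  | H g => rw [← cosetAction_apply_one H e, ← cosetAction_apply_one H e', hφ, hr]

lemma nonempty_quotient_equiv_fin {H : Subgroup G} {n : ℕ} (hn : n ≠ 0) (hH : H.index = n) :
    Nonempty (G ⧸ H ≃ Fin n) := by
  have : Finite (G ⧸ H) := Nat.finite_of_card_ne_zero (hH.trans_ne hn)
  exact ⟨Finite.equivFinOfCardEq hH⟩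

lemma finite_subgroup_index_eq [Group.FG G] {n : ℕ} (hn : n ≠ 0) :
    Finite {H : Subgroup G // H.index = n} := by
  have := Finite.of_injective _
    (cosetAction_prod_injective (Fin n) fun H : Subgroup G => H.index = n)
  refine Finite.of_surjective
    (Sigma.fst : (Σ H : {H : Subgroup G // H.index = n}, G ⧸ H.1 ≃ Fin n) → _) fun H => ?_
  obtain ⟨e⟩ := nonempty_quotient_equiv_fin hn H.2
  exact ⟨⟨H, e⟩, rfl⟩

lemma card_quotient_equiv_fin {H : Subgroup G} {n : ℕ} (hn : n ≠ 0) (hH : H.index = n) :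
    Nat.card (G ⧸ H ≃ Fin n) = n.factorial := by
  obtain ⟨e⟩ := nonempty_quotient_equiv_fin hn hH
  rw [Nat.card_congr (e.equivCongr (Equiv.refl (Fin n))), Nat.card_perm, Nat.card_fin]

lemma subgroupCount_mul_factorial_le [Group.FG G] {n : ℕ} (hn : n ≠ 0) :
    subgroupCount G n * n.factorial ≤ Nat.card (G →* Perm (Fin n)) * n := by
  have := finite_subgroup_index_eq (G := G) hn
  let := Fintype.ofFinite {H : Subgroup G // H.index = n}
  have hcard := fun H : {H : Subgroup G // H.index = n} => card_quotient_equiv_fin hn H.2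
  have := fun H => Nat.finite_of_card_ne_zero ((hcard H).trans_ne n.factorial_ne_zero)
  have hle := Nat.card_le_card_of_injective _
    (cosetAction_prod_injective (Fin n) fun H : Subgroup G => H.index = n)
  simpa only [Nat.card_sigma, hcard, Finset.sum_const, Finset.card_univ, smul_eq_mul,
    Nat.card_prod, Nat.card_fin, subgroupCount, Nat.card_eq_fintype_card, Fintype.card_fin]
    using hle

end PermutationRepresentations

section CentralExtensions

open Subgroup

variable {G Q : Type*} [Group G] [Group Q] {π : G →* Q} {z : G} {n : ℕ}

lemma subgroupCount_le_of_surjective [Group.FG G] (hπ : Function.Surjective π) (hn : n ≠ 0) :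
    subgroupCount Q n ≤ subgroupCount G n := by
  have := finite_subgroup_index_eq (G := G) hn
  refine Nat.card_le_card_of_injective
    (fun L => ⟨L.1.comap π, (index_comap_of_surjective L.1 hπ).trans L.2⟩) fun L L' heq => ?_
  exact Subtype.ext (comap_injective hπ (congrArg Subtype.val heq))

lemma exists_zmodHom_ker_eq_of_sup_zpowers (hz : z ∈ center G) {H K : Subgroup G}
    (hK : zpowers z ⊔ H = K) {d : ℕ} (hd : H.relIndex K = d) :
    ∃ χ : K →* Multiplicative (ZMod d), χ.ker.map K.subtype = H := by
  subst hK hd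
  have hle : zpowers z ≤ normalizer (H : Set G) :=
    (zpowers_le.2 hz).trans (center_le_normalizer _)
  have := normal_subgroupOf_of_le_normalizer hle
  have := normal_subgroupOf_sup_of_le_normalizer hle
  let e := QuotientGroup.quotientInfEquivProdNormalizerQuotient (zpowers z) H hle
  have hcyclic : IsCyclic (↥(zpowers z ⊔ H) ⧸ H.subgroupOf (zpowers z ⊔ H)) :=
    isCyclic_of_surjective (e.toMonoidHom.comp (QuotientGroup.mk' _))
      (e.surjective.comp (QuotientGroup.mk'_surjective _))
  let ε : ↥(zpowers z ⊔ H) ⧸ H.subgroupOf (zpowers z ⊔ H) ≃*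
      Multiplicative (ZMod (H.relIndex (zpowers z ⊔ H))) := (zmodCyclicMulEquiv hcyclic).symm
  refine ⟨(MonoidHomClass.toMonoidHom ε).comp (QuotientGroup.mk' (H.subgroupOf _)), ?_⟩
  rw [MonoidHom.ker_mulEquiv_comp, QuotientGroup.ker_mk', subgroupOf_map_subtype]
  exact inf_eq_left.2 le_sup_right

lemma card_subgroup_monoidHom_le [Group.FG G] (K : Subgroup G) [K.FiniteIndex] {A : Type*}
    [Group A] [Finite A] : Nat.card (K →* A) ≤ Nat.card A ^ (K.index * Group.rank G) :=
  (card_monoidHom_le _).trans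
    (Nat.pow_le_pow_right Nat.card_pos (rank_le_index_mul_rank K))

lemma exists_divisor_zmodHom_ker_eq (hπ : Function.Surjective π) (hz : z ∈ center G)
    (hker : π.ker = zpowers z) (hn : n ≠ 0) {H : Subgroup G} (hH : H.index = n) :
    ∃ (k : n.divisors) (L : {L : Subgroup Q // L.index = k})
      (χ : L.1.comap π →* Multiplicative (ZMod (n / k))), χ.ker.map (L.1.comap π).subtype = H := by
  have hK : zpowers z ⊔ H = (H.map π).comap π := by rw [comap_map_eq, hker, sup_comm]
  have hmul : H.relIndex ((H.map π).comap π) * (H.map π).index = n := by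
    rw [← index_comap_of_surjective (H.map π) hπ, ← hH]
    exact relIndex_mul_index (le_comap_map π H)
  have hpos : 0 < (H.map π).index := Nat.pos_of_ne_zero (right_ne_zero_of_mul (hmul.trans_ne hn))
  obtain ⟨χ, hχ⟩ := exists_zmodHom_ker_eq_of_sup_zpowers hz hK
    (Nat.eq_div_of_mul_eq_left hpos.ne' hmul)
  exact ⟨⟨_, Nat.mem_divisors.2 ⟨Dvd.intro_left _ hmul, hn⟩⟩, ⟨H.map π, rfl⟩, χ, hχ⟩

theorem subgroupCount_le_sum_divisors [Group.FG G] (hπ : Function.Surjective π)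
    (hz : z ∈ center G) (hker : π.ker = zpowers z) (hn : n ≠ 0) :
    subgroupCount G n ≤
      ∑ k ∈ n.divisors, (n / k) ^ (k * Group.rank G) * subgroupCount Q k := by
  have : Group.FG Q := Group.fg_of_surjective hπ
  have hk (k : n.divisors) : (k : ℕ) ≠ 0 := (Nat.pos_of_mem_divisors k.2).ne'
  have (k : n.divisors) : NeZero (n / k) :=
    ⟨(Nat.div_pos (Nat.divisor_le k.2) (Nat.pos_of_mem_divisors k.2)).ne'⟩
  have (k : n.divisors) : Finite (Multiplicative (ZMod (n / k))) :=
    inferInstanceAs (Finite (ZMod (n / k)))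
  have hindex (k : n.divisors) (L : {L : Subgroup Q // L.index = k}) : (L.1.comap π).index = k :=
    (index_comap_of_surjective L.1 hπ).trans L.2
  have (k : n.divisors) (L : {L : Subgroup Q // L.index = k}) : (L.1.comap π).FiniteIndex :=
    ⟨(hindex k L).trans_ne (hk k)⟩
  have (k : n.divisors) : Finite {L : Subgroup Q // L.index = k} := finite_subgroup_index_eq (hk k)
  have (k : n.divisors) := Fintype.ofFinite {L : Subgroup Q // L.index = k}
  choose k L χ hχ using fun H : {H : Subgroup G // H.index = n} =>
    exists_divisor_zmodHom_ker_eq hπ hz hker hn H.2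
  have hinj : Function.Injective fun H => (⟨k H, L H, χ H⟩ : Σ (k : n.divisors)
      (L : {L : Subgroup Q // L.index = k}), L.1.comap π →* Multiplicative (ZMod (n / k))) :=
    Function.Injective.of_comp (f := fun x => x.2.2.ker.map (x.2.1.1.comap π).subtype)
      (by simpa only [Function.comp_def, hχ] using Subtype.val_injective)
  refine (Nat.card_le_card_of_injective _ hinj).trans ?_
  rw [Nat.card_sigma, ← Finset.sum_coe_sort n.divisors]
  refine Finset.sum_le_sum fun k _ => ?_
  rw [Nat.card_sigma, subgroupCount, Nat.card_eq_fintype_card, mul_comm, ← smul_eq_mul]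
  refine Finset.sum_le_card_nsmul _ _ _ fun L _ => ?_
  simpa only [hindex, Nat.card_congr Multiplicative.toAdd, Nat.card_zmod] using
    card_subgroup_monoidHom_le (L.1.comap π) (A := Multiplicative (ZMod (n / k)))

end CentralExtensions

section TorusKnotGroup

open Subgroup

variable {m : ℕ} {p : Fin m → ℕ}

instance fg_presentedGroup {α : Type*} [Finite α] (rels : Set (FreeGroup α)) :
    Group.FG (PresentedGroup rels) :=
  Group.fg_of_surjective (PresentedGroup.mk_surjective rels)

lemma CyclicFreeProduct.of_pow (i : Fin m) :
    (PresentedGroup.of i : CyclicFreeProduct m p) ^ p i = 1 := by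
  have hmk : PresentedGroup.mk (cyclicRels m p) (FreeGroup.of i ^ p i) = 1 :=
    PresentedGroup.one_of_mem ⟨i, rfl⟩
  rwa [map_pow] at hmk

/-- The universal property of `C_{p_1} * ⋯ * C_{p_m}`: homomorphisms are tuples of roots of `1`. -/
def CyclicFreeProduct.homEquiv (p : Fin m → ℕ) (A : Type*) [Group A] :
    (CyclicFreeProduct m p →* A) ≃ ∀ i, {x : A // x ^ p i = 1} where
  toFun φ i := ⟨φ (PresentedGroup.of i), by rw [← map_pow, of_pow, map_one]⟩
  invFun x := PresentedGroup.toGroup (f := fun i => (x i : A)) <| by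
    rintro _ ⟨i, rfl⟩
    rw [map_pow, FreeGroup.lift_apply_of, (x i).2]
  left_inv φ := PresentedGroup.ext fun i => PresentedGroup.toGroup.of _
  right_inv x := funext fun i => Subtype.ext (PresentedGroup.toGroup.of _)

lemma CyclicFreeProduct.homEquiv_symm_of {A : Type*} [Group A] (x : ∀ i, {x : A // x ^ p i = 1})
    (i : Fin m) : (homEquiv p A).symm x (PresentedGroup.of i) = x i :=
  congrArg Subtype.val (congrFun ((homEquiv p A).apply_symm_apply x) i)

lemma TorusKnotGroup.of_pow_eq (i j : Fin m) :
    (PresentedGroup.of i : TorusKnotGroup m p) ^ p i = PresentedGroup.of j ^ p j := by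
  have hmk : PresentedGroup.mk (torusRels m p) (FreeGroup.of i ^ p i) =
      PresentedGroup.mk (torusRels m p) (FreeGroup.of j ^ p j) :=
    PresentedGroup.mk_eq_mk_of_mul_inv_mem ⟨i, j, rfl⟩
  rwa [map_pow, map_pow] at hmk

lemma TorusKnotGroup.of_pow_mem_center (i : Fin m) :
    (PresentedGroup.of i ^ p i : TorusKnotGroup m p) ∈ center (TorusKnotGroup m p) := by
  refine mem_center_iff.2 fun g => mem_centralizer_singleton_iff.1 ?_
  refine PresentedGroup.generated_by (torusRels m p) _ (fun j => ?_) g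
  rw [mem_centralizer_singleton_iff, of_pow_eq i j]
  exact (Commute.refl _).pow_right (p j)

/-- The quotient map `Γ_{p_1,…,p_m} → C_{p_1} * ⋯ * C_{p_m}` killing the common power. -/
def TorusKnotGroup.toCyclicFreeProduct (m : ℕ) (p : Fin m → ℕ) :
    TorusKnotGroup m p →* CyclicFreeProduct m p :=
  PresentedGroup.toGroup (f := PresentedGroup.of) <| by
    rintro _ ⟨i, j, rfl⟩
    simp [CyclicFreeProduct.of_pow]

lemma TorusKnotGroup.toCyclicFreeProduct_of (i : Fin m) :
    toCyclicFreeProduct m p (PresentedGroup.of i) = PresentedGroup.of i :=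
  PresentedGroup.toGroup.of _

lemma TorusKnotGroup.toCyclicFreeProduct_surjective :
    Function.Surjective (toCyclicFreeProduct m p) :=
  PresentedGroup.generated_by _ (toCyclicFreeProduct m p).range fun i =>
    ⟨PresentedGroup.of i, toCyclicFreeProduct_of i⟩

lemma TorusKnotGroup.ker_toCyclicFreeProduct (i : Fin m) :
    (toCyclicFreeProduct m p).ker = zpowers (PresentedGroup.of i ^ p i) := by
  set Z : Subgroup (TorusKnotGroup m p) := zpowers (PresentedGroup.of i ^ p i)
  have hZ : Z ≤ center _ := zpowers_le.2 (of_pow_mem_center i)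
  have : Z.Normal := ⟨fun x hx g => by rwa [mem_center_iff.1 (hZ hx) g, mul_inv_cancel_right]⟩
  have hpow (j : Fin m) : QuotientGroup.mk' Z (PresentedGroup.of j) ^ p j = 1 := by
    rw [← map_pow, of_pow_eq j i]
    exact (QuotientGroup.eq_one_iff _).2 (mem_zpowers _)
  let ψ := (CyclicFreeProduct.homEquiv p (TorusKnotGroup m p ⧸ Z)).symm fun j => ⟨_, hpow j⟩
  have hψ : ψ.comp (toCyclicFreeProduct m p) = QuotientGroup.mk' Z := by
    refine PresentedGroup.ext fun j => ?_
    rw [MonoidHom.comp_apply, toCyclicFreeProduct_of]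
    exact CyclicFreeProduct.homEquiv_symm_of _ j
  refine le_antisymm ?_ (zpowers_le.2 ?_)
  · rw [← QuotientGroup.ker_mk' Z, ← hψ, ← MonoidHom.comap_ker]
    exact ker_le_comap _ _
  · rw [MonoidHom.mem_ker, map_pow, toCyclicFreeProduct_of, CyclicFreeProduct.of_pow]

end TorusKnotGroup

section RootsOfOneInPerm

open Equiv Real
open scoped Finset

lemma exp_natCast_mul_log {n : ℕ} (hn : n ≠ 0) (q : ℕ) : exp (q * log n) = (n : ℝ) ^ q := by
  rw [exp_nat_mul, exp_log (by positivity)]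

lemma exp_mul_log_sub_le_factorial (n q : ℕ) : exp (q * log n - n) ≤ q.factorial := by
  rcases eq_or_ne n 0 with rfl | hn
  · simpa [Nat.one_le_iff_ne_zero] using q.factorial_ne_zero
  · rw [exp_sub, exp_natCast_mul_log hn, div_le_comm₀ (exp_pos _) (by positivity)]
    exact pow_div_factorial_le_exp n n.cast_nonneg q

lemma factorial_le_exp_mul_log {q n : ℕ} (hq : q ≤ n) : q.factorial ≤ exp (q * log n) := by
  rcases eq_or_ne n 0 with rfl | hn
  · simp [Nat.le_zero.1 hq]
  · rw [exp_natCast_mul_log hn]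
    exact_mod_cast q.factorial_le_pow.trans (Nat.pow_le_pow_left hq q)

lemma exp_le_factorial_mul_prod_count_factorial {p : ℕ} (hp : 0 < p) {c : Multiset ℕ}
    (hc : ∀ a ∈ c, 2 ≤ a ∧ a ≤ p) (n s : ℕ) :
    exp ((s + c.card) * log n - p * n) ≤
      (s.factorial * c.prod * ∏ a ∈ c.toFinset, (c.count a).factorial : ℕ) := by
  have hparts : c.toFinset.card + 1 ≤ p := by
    have hsub : c.toFinset ⊆ Finset.Icc 2 p := fun a ha =>
      Finset.mem_Icc.2 (hc a (Multiset.mem_toFinset.1 ha))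
    have hcard := Finset.card_le_card hsub
    rw [Nat.card_Icc] at hcard
    omega
  have hprod : (1 : ℝ) ≤ (c.prod : ℕ) := by
    exact_mod_cast Nat.pos_of_ne_zero
      (Multiset.prod_ne_zero fun h0 => absurd (hc 0 h0).1 (by decide))
  have hcount : (c.card : ℝ) = ∑ a ∈ c.toFinset, (c.count a : ℝ) := by
    exact_mod_cast (Multiset.toFinset_sum_count_eq c).symm
  calc exp ((s + c.card) * log n - p * n)
      ≤ exp (s * log n - n) * ∏ a ∈ c.toFinset, exp (c.count a * log n - n) := by
        rw [← exp_sum, ← exp_add, exp_le_exp, Finset.sum_sub_distrib, ← Finset.sum_mul, ← hcount,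
          Finset.sum_const, nsmul_eq_mul]
        have : ((c.toFinset.card + 1 : ℕ) : ℝ) * n ≤ p * n := by gcongr
        push_cast at this
        linarith
    _ ≤ s.factorial * ∏ a ∈ c.toFinset, ((c.count a).factorial : ℝ) := by
        gcongr <;> exact exp_mul_log_sub_le_factorial n _
    _ ≤ s.factorial * c.prod * ∏ a ∈ c.toFinset, ((c.count a).factorial : ℝ) := by
        gcongr
        exact le_mul_of_one_le_right (by positivity) hprod
    _ = _ := by simp only [Nat.cast_mul, Nat.cast_prod]

variable {α : Type*} [Fintype α] {p : ℕ}

lemma two_le_and_le_of_mem_cycleType [DecidableEq α] (hp : 0 < p) {τ : Perm α}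
    (hτ : τ ^ p = 1) {a : ℕ} (ha : a ∈ τ.cycleType) : 2 ≤ a ∧ a ≤ p :=
  ⟨Perm.two_le_of_mem_cycleType ha, Nat.le_of_dvd hp
    ((Perm.dvd_of_mem_cycleType ha).trans (orderOf_dvd_of_pow_eq_one hτ))⟩

lemma card_cycleType_eq_le [DecidableEq α] (hp : 0 < p) {τ : Perm α} (hτ : τ ^ p = 1) :
    (#{σ : Perm α | σ.cycleType = τ.cycleType} : ℝ) ≤
      exp ((1 - 1 / p) * (Fintype.card α * log (Fintype.card α)) + p * Fintype.card α) := by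
  set n := Fintype.card α
  set c := τ.cycleType
  set s := n - c.sum
  have hc : ∀ a ∈ c, 2 ≤ a ∧ a ≤ p := fun a => two_le_and_le_of_mem_cycleType hp hτ
  have hsum : c.sum ≤ n := τ.sum_cycleType ▸ Finset.card_le_univ _
  -- `s + c.card` is the number of cycles of `τ`, fixed points included
  have hcycles : (n : ℝ) ≤ p * (s + c.card) := by
    have hle := c.sum_le_card_nsmul p fun a ha => (hc a ha).2
    rw [smul_eq_mul] at hle
    have hs : s ≤ p * s := Nat.le_mul_of_pos_left s hp
    have : n ≤ p * (s + c.card) := by rw [mul_add, mul_comm p c.card]; omega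
    exact_mod_cast this
  have hexp : n * log n - ((s + c.card) * log n - p * n) ≤ (1 - 1 / p) * (n * log n) + p * n := by
    have : n / p * log n ≤ (s + c.card) * log n := by
      gcongr
      rwa [div_le_iff₀' (by positivity)]
    linear_combination this
  have hclass := Perm.card_of_cycleType_mul_eq α c
  rw [if_pos ⟨hsum, fun a ha => (hc a ha).1⟩] at hclass
  refine le_trans ?_ (exp_le_exp.2 hexp)
  rw [exp_sub, le_div_iff₀ (exp_pos _)]
  refine le_trans ?_ (factorial_le_exp_mul_log le_rfl)
  rw [← hclass, Nat.cast_mul]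
  gcongr
  exact exp_le_factorial_mul_prod_count_factorial hp hc n s

lemma card_image_cycleType_le [DecidableEq α] (S : Finset (Perm α)) :
    #(S.image Perm.cycleType) ≤ 2 ^ Fintype.card α := by
  have hsub : S.image Perm.cycleType ⊆
      Finset.univ.image fun P : (Fintype.card α).Partition => P.parts.filter (2 ≤ ·) := by
    intro c hc
    obtain ⟨τ, -, rfl⟩ := Finset.mem_image.1 hc
    exact Finset.mem_image.2
      ⟨τ.partition, Finset.mem_univ _, Perm.filter_parts_partition_eq_cycleType⟩
  calc #(S.image Perm.cycleType) ≤ Fintype.card (Fintype.card α).Partition :=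
        (Finset.card_le_card hsub).trans Finset.card_image_le
    _ ≤ Fintype.card (Composition (Fintype.card α)) :=
        Fintype.card_le_of_surjective _ Nat.Partition.ofComposition_surj
    _ ≤ 2 ^ Fintype.card α := by
        rw [composition_card]
        exact Nat.pow_le_pow_right two_pos (Nat.sub_le _ 1)

theorem card_perm_pow_eq_one_le (hp : 0 < p) :
    (Nat.card {τ : Perm α // τ ^ p = 1} : ℝ) ≤
      exp ((1 - 1 / p) * (Fintype.card α * log (Fintype.card α)) + (p + 1) * Fintype.card α) := by
  classical
  set n := Fintype.card α
  set M := exp ((1 - 1 / p) * (n * log n) + p * n)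
  let S : Finset (Perm α) := {τ | τ ^ p = 1}
  have hfiber : ∀ c ∈ S.image Perm.cycleType, (#{τ ∈ S | τ.cycleType = c} : ℝ) ≤ M := by
    intro c hc
    obtain ⟨τ, hτ, rfl⟩ := Finset.mem_image.1 hc
    have hle : #{σ ∈ S | σ.cycleType = τ.cycleType} ≤ #{σ : Perm α | σ.cycleType = τ.cycleType} :=
      Finset.card_le_card (Finset.filter_subset_filter _ (Finset.subset_univ S))
    exact (Nat.cast_le.2 hle).trans (card_cycleType_eq_le hp (Finset.mem_filter.1 hτ).2)
  have htwo : (2 : ℝ) ^ n ≤ exp n := by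
    rw [← exp_one_pow]
    gcongr
    linarith [add_one_le_exp (1 : ℝ)]
  calc (Nat.card {τ : Perm α // τ ^ p = 1} : ℝ)
      = ∑ c ∈ S.image Perm.cycleType, (#{τ ∈ S | τ.cycleType = c} : ℝ) := by
        rw [Nat.card_eq_fintype_card, Fintype.card_subtype,
          Finset.card_eq_sum_card_fiberwise (fun τ => Finset.mem_image_of_mem Perm.cycleType)]
        exact Nat.cast_sum _ _
    _ ≤ #(S.image Perm.cycleType) * M := by
        simpa only [nsmul_eq_mul] using Finset.sum_le_card_nsmul _ _ _ hfiber
    _ ≤ 2 ^ n * M := by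
        gcongr
        exact_mod_cast card_image_cycleType_le S
    _ ≤ exp n * M := by gcongr
    _ = _ := by
        rw [← exp_add]
        ring_nf

lemma pow_eq_one_of_cycleType_eq_replicate [DecidableEq α] {τ : Perm α} {q : ℕ}
    (hτ : τ.cycleType = Multiset.replicate q p) : τ ^ p = 1 := by
  rw [← orderOf_dvd_iff_pow_eq_one, ← τ.lcm_cycleType, Multiset.lcm_dvd, hτ]
  exact fun a ha => (Multiset.eq_of_mem_replicate ha).dvd

lemma factorial_le_card_perm_pow_eq_one_mul (hp : 2 ≤ p) {q : ℕ} (hq : q * p ≤ Fintype.card α) :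
    (Fintype.card α).factorial ≤ Nat.card {τ : Perm α // τ ^ p = 1} *
      ((Fintype.card α - q * p).factorial * p ^ q * q.factorial) := by
  classical
  have hcount : ∏ a ∈ (Multiset.replicate q p).toFinset,
      ((Multiset.replicate q p).count a).factorial = q.factorial := by
    rcases eq_or_ne q 0 with rfl | hq0
    · simp
    · simp [Multiset.toFinset_replicate, hq0]
  have hclass := Perm.card_of_cycleType_mul_eq α (Multiset.replicate q p)
  rw [hcount, Multiset.sum_replicate, Multiset.prod_replicate, smul_eq_mul,
    if_pos ⟨hq, fun a ha => (Multiset.eq_of_mem_replicate ha).symm ▸ hp⟩] at hclass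
  rw [← hclass, Nat.card_eq_fintype_card, Fintype.card_subtype]
  gcongr with τ
  exact pow_eq_one_of_cycleType_eq_replicate

lemma mod_mul_log_add_div_mul_log_le (hp : 0 < p) {N n : ℕ} (hN : N ≤ n) :
    (N % p : ℕ) * log n + (N / p : ℕ) * log p + (N / p : ℕ) * log n ≤
      1 / p * (N * log n) + (p + 1) * n := by
  have hremainder : (N % p : ℕ) * log n ≤ (p : ℝ) * n := by
    gcongr
    · exact_mod_cast (Nat.mod_lt N hp).le
    · exact log_le_self n.cast_nonneg
  have hlogp : (N / p : ℕ) * log p ≤ (n : ℝ) :=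
    calc (N / p : ℕ) * log p ≤ ((N / p : ℕ) * p : ℝ) := by
          gcongr
          exact log_le_self p.cast_nonneg
      _ ≤ n := by exact_mod_cast (Nat.div_mul_le_self N p).trans hN
  have hquotient : (N / p : ℕ) * log n ≤ N / p * log n := by
    gcongr
    exact Nat.cast_div_le
  linear_combination hremainder + hlogp + hquotient

theorem le_card_perm_pow_eq_one (hp : 2 ≤ p) {n : ℕ} (hn : Fintype.card α ≤ n) :
    exp ((1 - 1 / p) * (Fintype.card α * log n) - (p + 2) * n) ≤
      Nat.card {τ : Perm α // τ ^ p = 1} := by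
  set N := Fintype.card α
  set q := N / p
  have hfactorials : ((N - q * p).factorial * p ^ q * q.factorial : ℝ) ≤
      exp ((N % p : ℕ) * log n + q * log p + q * log n) := by
    rw [exp_add, exp_add, exp_natCast_mul_log (n := p) (by omega),
      Nat.sub_eq_of_eq_add' (Nat.div_add_mod' N p).symm]
    gcongr
    · exact factorial_le_exp_mul_log ((Nat.mod_le N p).trans hn)
    · exact factorial_le_exp_mul_log ((Nat.div_le_self N p).trans hn)
  have hle : (N.factorial : ℝ) ≤ Nat.card {τ : Perm α // τ ^ p = 1} *
      ((N - q * p).factorial * p ^ q * q.factorial) := by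
    exact_mod_cast factorial_le_card_perm_pow_eq_one_mul hp (Nat.div_mul_le_self N p)
  refine le_of_mul_le_mul_right ?_ (by positivity :
    (0 : ℝ) < (N - q * p).factorial * p ^ q * q.factorial)
  calc exp ((1 - 1 / p) * (N * log n) - (p + 2) * n) *
        ((N - q * p).factorial * p ^ q * q.factorial)
      ≤ exp (N * log n - n) := by
        refine (mul_le_mul_of_nonneg_left hfactorials (exp_pos _).le).trans ?_
        rw [← exp_add, exp_le_exp]
        linear_combination mod_mul_log_add_div_mul_log_le (by omega : 0 < p) hn
    _ ≤ _ := (exp_mul_log_sub_le_factorial n N).trans hle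

end RootsOfOneInPerm

section Skeletons

open Equiv Relation
open scoped Finset

variable {α ι : Type*} {σ : ι → Perm α}

/-- The edges `u → σ i u` of the Schreier graph of a family of permutations. -/
def SchreierStep (σ : ι → Perm α) (u v : α) : Prop := ∃ i, σ i u = v

section Update

variable [DecidableEq ι] {i : ι} {C : Perm α}

lemma reflTransGen_update_mul_of_schreierStep (hdisj : (σ i).Disjoint C) {x y : α}
    (hxy : ReflTransGen (SchreierStep σ) x y) :
    ReflTransGen (SchreierStep (Function.update σ i (σ i * C))) x y := by
  refine ReflTransGen.trans_induction_on hxy (fun _ => .refl) ?_ fun _ _ => .trans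
  rintro u _ ⟨j, rfl⟩
  by_cases hfix : σ j u = u
  · rw [hfix]
  refine .single ⟨j, ?_⟩
  rcases eq_or_ne j i with rfl | hj
  · rw [Function.update_self, Perm.mul_apply, (hdisj u).resolve_left hfix]
  · rw [Function.update_of_ne hj]

lemma reflTransGen_update_mul_of_isCycleOn {S : Finset α} (hC : C.IsCycleOn S)
    (hfix : ∀ x ∈ S, σ i x = x) {x y : α} (hx : x ∈ S) (hy : y ∈ S) :
    ReflTransGen (SchreierStep (Function.update σ i (σ i * C))) x y := by
  obtain ⟨k, rfl⟩ := hC.exists_pow_eq' S.finite_toSet hx hy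
  clear hy
  induction k with
  | zero => rfl
  | succ k ih =>
    have hmem : (C ^ (k + 1)) x ∈ S := (hC.1.perm_pow (k + 1)).mapsTo hx
    refine ih.tail ⟨i, ?_⟩
    rw [Function.update_self, Perm.mul_apply, ← Perm.mul_apply C, ← pow_succ', hfix _ hmem]

end Update

lemma exists_forall_apply_eq_of_reflTransGen {m : ℕ} {p : Fin m → ℕ}
    {σ : Fin m → Perm α} {x y : α} (hxy : ReflTransGen (SchreierStep σ) x y) :
    ∃ w : CyclicFreeProduct m p, ∀ φ : CyclicFreeProduct m p →* Perm α,
      (∀ i u, σ i u ≠ u → φ (PresentedGroup.of i) u = σ i u) → φ w x = y := by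
  induction hxy with
  | refl => exact ⟨1, fun φ _ => by rw [map_one, Perm.one_apply]⟩
  | @tail u _ _ hstep ih =>
    obtain ⟨w, hw⟩ := ih
    obtain ⟨i, rfl⟩ := hstep
    by_cases hfix : σ i u = u
    · exact ⟨w, fun φ hφ => (hw φ hφ).trans hfix.symm⟩
    · exact ⟨PresentedGroup.of i * w, fun φ hφ => by
        rw [map_mul, Perm.mul_apply, hw φ hφ, hφ i u hfix]⟩

variable [Fintype α] [DecidableEq α] {p c : ι → ℕ} {V : Finset α}

/-- A partial permutation representation of the free product `*_i C_{p i}` on the points `V ⊆ α`: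
a family of `p i`-th roots of `1` supported on `V` that acts transitively on `V`. -/
structure IsSkeleton (p : ι → ℕ) (V : Finset α) (σ : ι → Perm α) : Prop where
  pow_eq_one (i : ι) : σ i ^ p i = 1
  support_subset (i : ι) : (σ i).support ⊆ V
  connected {x y : α} (hx : x ∈ V) (hy : y ∈ V) : ReflTransGen (SchreierStep σ) x y

/-- There is a skeleton on `v` points of `α` whose `i`-th permutation moves `p i * c i` points;
it is thought of as a product of `c i` disjoint `p i`-cycles. -/
def HasSkeleton (α : Type*) [Fintype α] [DecidableEq α] (p : ι → ℕ) (v : ℕ) (c : ι → ℕ) : Prop :=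
  ∃ (V : Finset α) (σ : ι → Perm α),
    IsSkeleton p V σ ∧ #V = v ∧ ∀ i, #(σ i).support = p i * c i

lemma hasSkeleton_one [Nonempty α] (p : ι → ℕ) : HasSkeleton α p 1 0 := by
  obtain ⟨x⟩ := ‹Nonempty α›
  refine ⟨{x}, fun _ => 1, ⟨fun _ => one_pow _, fun _ => by simp, fun hx hy => ?_⟩, by simp⟩
  rw [Finset.mem_singleton.1 hx, Finset.mem_singleton.1 hy]

lemma exists_cycle_of_card_eq {S : Finset α} {k : ℕ} (hS : #S = k) (hk : 2 ≤ k) :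
    ∃ C : Perm α, C.IsCycleOn S ∧ C.support = S ∧ C ^ k = 1 := by
  obtain ⟨C, hcycle, hsub⟩ := S.exists_cycleOn
  have hnontrivial : (S : Set α).Nontrivial :=
    Finset.one_lt_card_iff_nontrivial.1 (by omega)
  have hsupport : C.support = S :=
    hsub.antisymm fun x hx => Perm.mem_support.2 (hcycle.apply_ne hnontrivial hx)
  refine ⟨C, hcycle, hsupport, Perm.ext fun x => ?_⟩
  by_cases hx : x ∈ S
  · rw [← hS, hcycle.pow_card_apply hx, Perm.one_apply]
  · rw [Perm.one_apply]
    exact Perm.pow_apply_eq_self_of_apply_eq_self (Perm.notMem_support.1 (hsupport ▸ hx)) k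

lemma IsSkeleton.update_mul [DecidableEq ι] {i : ι} {C : Perm α} (h : IsSkeleton p V σ)
    (hC : C.IsCycleOn C.support) (hpow : C ^ p i = 1) (hdisj : (σ i).Disjoint C) {a : α}
    (haV : a ∈ V) (haC : a ∈ C.support) :
    IsSkeleton p (V ∪ C.support) (Function.update σ i (σ i * C)) where
  pow_eq_one j := by
    rcases eq_or_ne j i with rfl | hj
    · rw [Function.update_self, hdisj.commute.mul_pow, h.pow_eq_one, hpow, one_mul]
    · rw [Function.update_of_ne hj, h.pow_eq_one]
  support_subset j := by
    rcases eq_or_ne j i with rfl | hj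
    · rw [Function.update_self, hdisj.support_mul]
      exact Finset.union_subset_union_left (h.support_subset j)
    · rw [Function.update_of_ne hj]
      exact (h.support_subset j).trans Finset.subset_union_left
  connected {x y} hx hy := by
    have hfix : ∀ x ∈ C.support, σ i x = x := fun x hx =>
      (hdisj x).resolve_right (Perm.mem_support.1 hx)
    have hto : ReflTransGen (SchreierStep (Function.update σ i (σ i * C))) x a := by
      rcases Finset.mem_union.1 hx with hxV | hxC
      · exact reflTransGen_update_mul_of_schreierStep hdisj (h.connected hxV haV)
      · exact reflTransGen_update_mul_of_isCycleOn hC hfix hxC haC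
    refine hto.trans ?_
    rcases Finset.mem_union.1 hy with hyV | hyC
    · exact reflTransGen_update_mul_of_schreierStep hdisj (h.connected haV hyV)
    · exact reflTransGen_update_mul_of_isCycleOn hC hfix haC hyC

lemma HasSkeleton.add_cycle [DecidableEq ι] {i : ι} {v r : ℕ} (h : HasSkeleton α p v c)
    (hp : 2 ≤ p i) (hr : r < p i) (hfree : p i * (c i + 1) ≤ v + r)
    (hroom : v + r ≤ Fintype.card α) :
    HasSkeleton α p (v + r) (c + Pi.single i 1) := by
  obtain ⟨V, σ, hσ, rfl, hsupport⟩ := h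
  obtain ⟨A, hAsub, hAcard⟩ : ∃ A ⊆ V \ (σ i).support, #A = p i - r := by
    apply Finset.exists_subset_card_eq
    rw [Finset.card_sdiff_of_subset (hσ.support_subset i), hsupport]
    rw [mul_add] at hfree
    omega
  obtain ⟨N, hNsub, hNcard⟩ : ∃ N ⊆ Vᶜ, #N = r := by
    apply Finset.exists_subset_card_eq
    rw [Finset.card_compl]
    omega
  obtain ⟨hAV, hAσ⟩ := Finset.subset_sdiff.1 hAsub
  have hVN : Disjoint V N := Finset.subset_compl_iff_disjoint_left.1 hNsub
  have hcard : #(A ∪ N) = p i := by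
    rw [Finset.card_union_of_disjoint (hVN.mono_left hAV), hAcard, hNcard]
    omega
  obtain ⟨C, hcycle, hCsupport, hpow⟩ := exists_cycle_of_card_eq hcard hp
  obtain ⟨a, ha⟩ : A.Nonempty := Finset.card_pos.1 (by omega)
  have hdisj : (σ i).Disjoint C := by
    rw [Perm.disjoint_iff_disjoint_support, hCsupport, Finset.disjoint_union_right]
    exact ⟨hAσ.symm, hVN.mono_left (hσ.support_subset i)⟩
  refine ⟨V ∪ C.support, Function.update σ i (σ i * C),
    hσ.update_mul (hCsupport ▸ hcycle) hpow hdisj (hAV ha)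
      (hCsupport ▸ Finset.mem_union_left N ha), ?_, fun j => ?_⟩
  · rw [hCsupport, ← Finset.union_assoc, Finset.union_eq_left.2 hAV,
      Finset.card_union_of_disjoint hVN, hNcard]
  · rcases eq_or_ne j i with rfl | hj
    · rw [Function.update_self, hdisj.card_support_mul, hsupport, hCsupport, hcard, Pi.add_apply,
        Pi.single_eq_same, mul_add, mul_one]
    · rw [Function.update_of_ne hj, hsupport, Pi.add_apply, Pi.single_eq_of_ne hj, add_zero]

section Growth

variable {a b : ι} {T r : ℕ}

/- Gluing each new cycle at a single point keeps the cost `∑ i, (p i - 1) * c i` equal to the number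
of points minus one; alternating between `a` and `b` ensures that such a point is available. -/
lemma HasSkeleton.alternate [DecidableEq ι] [Nonempty α] (hab : a ≠ b) (ha : 2 ≤ p a)
    (hb : 2 ≤ p b) (hroom : 1 + T * (p a + p b - 2) ≤ Fintype.card α) :
    HasSkeleton α p (1 + T * (p a + p b - 2)) (T • (Pi.single b 1 + Pi.single a 1)) := by
  obtain ⟨P, hP⟩ := Nat.exists_eq_add_of_le ha
  obtain ⟨Q, hQ⟩ := Nat.exists_eq_add_of_le hb
  have hsum : p a + p b - 2 = P + Q + 2 := by omega
  rw [hsum] at hroom ⊢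
  induction T with
  | zero => simpa using hasSkeleton_one p
  | succ T ih =>
    have hcb : (T • (Pi.single b 1 + Pi.single a 1) : ι → ℕ) b = T := by simp [hab.symm]
    have hca : (T • (Pi.single b 1 + Pi.single a 1) + Pi.single b 1 : ι → ℕ) a = T := by
      simp [hab]
    have hadd_b := (ih (by linarith)).add_cycle (i := b) (r := Q + 1) hb (by omega)
      (by rw [hcb, hQ]; nlinarith) (by linarith)
    have hadd_a := hadd_b.add_cycle (i := a) (r := P + 1) ha (by omega)
      (by rw [hca, hP]; nlinarith) (by linarith)
    convert hadd_a using 1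
    · ring
    · rw [succ_nsmul, add_assoc]

lemma HasSkeleton.alternate_add [DecidableEq ι] [Nonempty α] (hab : a ≠ b) (ha : 2 ≤ p a)
    (hb : 2 ≤ p b) (hr : r * (p a - 1) ≤ 1 + T * (p b - 2))
    (hroom : 1 + T * (p a + p b - 2) + r ≤ Fintype.card α) :
    HasSkeleton α p (1 + T * (p a + p b - 2) + r)
      (T • (Pi.single b 1 + Pi.single a 1) + r • Pi.single a 1) := by
  obtain ⟨P, hP⟩ := Nat.exists_eq_add_of_le ha
  obtain ⟨Q, hQ⟩ := Nat.exists_eq_add_of_le hb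
  have hsum : p a + p b - 2 = P + Q + 2 := by omega
  rw [show p a - 1 = P + 1 by omega, show p b - 2 = Q by omega] at hr
  rw [hsum] at hroom ⊢
  induction r with
  | zero => simpa [hsum] using HasSkeleton.alternate hab ha hb (hsum ▸ hroom)
  | succ r ih =>
    have hca : (T • (Pi.single b 1 + Pi.single a 1) + r • Pi.single a 1 : ι → ℕ) a = T + r := by
      simp [hab]
    have hadd := (ih (by linarith) (by linarith)).add_cycle (i := a) (r := 1) ha (by omega)
      (by rw [hca, hP]; nlinarith) (by linarith)
    rwa [add_assoc, add_assoc (T • _), ← succ_nsmul] at hadd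

lemma sum_sub_one_mul_nsmul_single [DecidableEq ι] [Fintype ι] :
    ∑ i, (p i - 1) * (T • (Pi.single b 1 + Pi.single a 1) + r • Pi.single a 1 : ι → ℕ) i =
      T * ((p b - 1) + (p a - 1)) + r * (p a - 1) := by
  simp only [Pi.add_apply, Pi.smul_apply, smul_eq_mul, Pi.single_apply, mul_add,
    Finset.sum_add_distrib, mul_ite, mul_one, mul_zero, Finset.sum_ite_eq', Finset.mem_univ,
    if_true]
  ring

lemma exists_hasSkeleton_fin [Fintype ι] (hab : a ≠ b) (ha : 2 ≤ p a) (hle : p a ≤ p b) :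
    ∃ K, ∀ n ≥ K, ∃ c : ι → ℕ,
      HasSkeleton (Fin n) p n c ∧ ∑ i, (p i - 1) * c i ≤ n + K := by
  classical
  set D := p a + p b - 2
  refine ⟨1 + D * (D * p a), fun n hn => ?_⟩
  have : NeZero n := ⟨by omega⟩
  set T := (n - 1) / D
  set r := (n - 1) % D
  have hn_eq : 1 + T * D + r = n := by
    have : T * D + r = n - 1 := Nat.div_add_mod' (n - 1) D
    omega
  have hrD : r < D := Nat.mod_lt _ (by omega)
  have hrP : r * (p a - 1) ≤ D * p a := Nat.mul_le_mul hrD.le (Nat.sub_le _ _)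
  have hT : D * p a ≤ T := (Nat.le_div_iff_mul_le (by omega)).2 (by rw [mul_comm]; omega)
  have hfew : r * (p a - 1) ≤ 1 + T * (p b - 2) := by
    rcases eq_or_ne (p b) 2 with hb | hb
    · have : p a = 2 := by omega
      simp only [this, hb] at hrD ⊢
      omega
    · have : T ≤ T * (p b - 2) := Nat.le_mul_of_pos_right T (by omega)
      omega
  refine ⟨T • (Pi.single b 1 + Pi.single a 1) + r • Pi.single a 1, ?_, ?_⟩
  · have h := HasSkeleton.alternate_add (α := Fin n) hab ha (ha.trans hle) hfew
      (by rw [Fintype.card_fin]; exact hn_eq.le)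
    rwa [hn_eq] at h
  · rw [sum_sub_one_mul_nsmul_single, show p b - 1 + (p a - 1) = D by omega]
    have : D * p a ≤ D * (D * p a) := Nat.le_mul_of_pos_left _ (by omega)
    omega

end Growth

section Perturbation

variable {m : ℕ} {p : Fin m → ℕ} {σ : Fin m → Perm α}

theorem IsSkeleton.prod_card_le_subgroupCount [Nonempty α] (h : IsSkeleton p Finset.univ σ) :
    ∏ i, Nat.card {τ : Perm α // (σ i).Disjoint τ ∧ τ ^ p i = 1} ≤
      subgroupCount (CyclicFreeProduct m p) (Fintype.card α) := by
  obtain ⟨r⟩ := ‹Nonempty α›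
  let φ (τ : ∀ i, {τ : Perm α // (σ i).Disjoint τ ∧ τ ^ p i = 1}) :
      CyclicFreeProduct m p →* Perm α :=
    (CyclicFreeProduct.homEquiv p (Perm α)).symm fun i => ⟨σ i * (τ i).1, by
      rw [(τ i).2.1.commute.mul_pow, h.pow_eq_one, (τ i).2.2, one_mul]⟩
  have hof (τ) (i) : φ τ (PresentedGroup.of i) = σ i * (τ i).1 :=
    CyclicFreeProduct.homEquiv_symm_of _ i
  have hext (τ) (i) (u) (hu : σ i u ≠ u) : φ τ (PresentedGroup.of i) u = σ i u := by
    rw [hof, Perm.mul_apply, ((τ i).2.1 u).resolve_left hu]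
  choose w hw using fun v => exists_forall_apply_eq_of_reflTransGen (p := p)
    (h.connected (Finset.mem_univ r) (Finset.mem_univ v))
  have hindex (τ) : ((MulAction.stabilizer (Perm α) r).comap (φ τ)).index = Fintype.card α := by
    rw [index_comap_stabilizer (φ τ) r fun v => ⟨w v, hw v _ (hext τ)⟩, Nat.card_eq_fintype_card]
  have := finite_subgroup_index_eq (G := CyclicFreeProduct m p) (Fintype.card_ne_zero (α := α))
  rw [← Nat.card_pi]
  refine Nat.card_le_card_of_injective (fun τ => ⟨_, hindex τ⟩) fun τ τ' heq => ?_
  have hφ : φ τ = φ τ' := eq_of_comap_stabilizer_eq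
    (fun v => ⟨w v, hw v _ (hext τ), hw v _ (hext τ')⟩) (congrArg Subtype.val heq)
  funext i
  have hi := DFunLike.congr_fun hφ (PresentedGroup.of i)
  rw [hof, hof] at hi
  exact Subtype.ext (mul_left_cancel hi)

lemma card_perm_fixedPoints_le {β : Type*} [Finite β] (σ : Perm β) (k : ℕ) :
    Nat.card {τ : Perm (Function.fixedPoints σ) // τ ^ k = 1} ≤
      Nat.card {τ : Perm β // σ.Disjoint τ ∧ τ ^ k = 1} := by
  classical
  refine Nat.card_le_card_of_injective (fun τ => ⟨Perm.ofSubtype τ.1, fun x => ?_, ?_⟩) ?_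
  · exact or_iff_not_imp_left.2 fun hx => Perm.ofSubtype_apply_of_not_mem τ.1 hx
  · rw [← map_pow, τ.2, map_one]
  · exact fun τ τ' heq => Subtype.ext (Perm.ofSubtype_injective (congrArg Subtype.val heq))

lemma exp_le_card_disjoint_pow_eq_one {σ : Perm α} {k c : ℕ} (hk : 2 ≤ k)
    (hσ : #σ.support = k * c) :
    Real.exp ((1 - 1 / k) * (Fintype.card α * Real.log (Fintype.card α)) -
      ((k - 1 : ℕ) * c : ℕ) * Real.log (Fintype.card α) - (k + 2) * Fintype.card α) ≤
      Nat.card {τ : Perm α // σ.Disjoint τ ∧ τ ^ k = 1} := by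
  have hcard : (Fintype.card (Function.fixedPoints σ) : ℝ) = Fintype.card α - k * c := by
    rw [Perm.card_fixedPoints, Perm.sum_cycleType, Nat.cast_sub (Finset.card_le_univ _), hσ,
      Nat.cast_mul]
  have hroots := le_card_perm_pow_eq_one (α := Function.fixedPoints σ) hk
    (Fintype.card_subtype_le (· ∈ Function.fixedPoints σ))
  refine le_trans (le_of_eq ?_) (hroots.trans (Nat.cast_le.2 (card_perm_fixedPoints_le σ k)))
  rw [hcard, Nat.cast_mul, Nat.cast_sub (by omega : 1 ≤ k)]
  congr 1
  field_simp
  push_cast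
  ring

end Perturbation

end Skeletons

section GrowthOfCyclicFreeProduct

open Equiv Real

variable {m : ℕ} {p : Fin m → ℕ}

/-- The negative Euler characteristic `∑ i, (1 - 1 / p i) - 1` of `C_{p_1} * ⋯ * C_{p_m}`. -/
noncomputable def negEulerChar (p : Fin m → ℕ) : ℝ := ∑ i, (1 - 1 / (p i : ℝ)) - 1

theorem subgroupCount_cyclicFreeProduct_le (hp : ∀ i, 0 < p i) {n : ℕ} (hn : n ≠ 0) :
    (subgroupCount (CyclicFreeProduct m p) n : ℝ) ≤
      exp (negEulerChar p * (n * log n) + (∑ i, ((p i : ℝ) + 1) + 2) * n) := by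
  have hhom : (Nat.card (CyclicFreeProduct m p →* Perm (Fin n)) : ℝ) ≤
      exp (∑ i, ((1 - 1 / p i) * (n * log n) + (p i + 1) * n)) := by
    rw [Nat.card_congr (CyclicFreeProduct.homEquiv p _), Nat.card_pi, Nat.cast_prod, exp_sum]
    gcongr with i
    simpa only [Fintype.card_fin] using card_perm_pow_eq_one_le (α := Fin n) (hp i)
  have hcount : (subgroupCount (CyclicFreeProduct m p) n * n.factorial : ℝ) ≤
      Nat.card (CyclicFreeProduct m p →* Perm (Fin n)) * n := by
    exact_mod_cast subgroupCount_mul_factorial_le (G := CyclicFreeProduct m p) hn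
  refine le_of_mul_le_mul_right (hcount.trans ?_) (by positivity : (0 : ℝ) < n.factorial)
  calc (Nat.card (CyclicFreeProduct m p →* Perm (Fin n)) : ℝ) * n
      ≤ exp (∑ i, ((1 - 1 / p i) * (n * log n) + (p i + 1) * n)) * exp n := by
        gcongr
        linarith [add_one_le_exp (n : ℝ)]
    _ = exp (negEulerChar p * (n * log n) + (∑ i, ((p i : ℝ) + 1) + 2) * n) *
          exp (n * log n - n) := by
        rw [← exp_add, ← exp_add, negEulerChar, Finset.sum_add_distrib, ← Finset.sum_mul,
          ← Finset.sum_mul]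
        ring_nf
    _ ≤ _ := by
        gcongr
        exact exp_mul_log_sub_le_factorial n n

lemma exists_ne_and_apply_le {ι β : Type*} [Nontrivial ι] [LinearOrder β] (f : ι → β) :
    ∃ a b, a ≠ b ∧ f a ≤ f b := by
  obtain ⟨a, b, hab⟩ := exists_pair_ne ι
  rcases le_total (f a) (f b) with hle | hle
  exacts [⟨a, b, hab, hle⟩, ⟨b, a, hab.symm, hle⟩]

theorem eventually_le_subgroupCount_cyclicFreeProduct (hm : 2 ≤ m) (hp : ∀ i, 2 ≤ p i) :
    ∃ A : ℝ, ∀ᶠ n : ℕ in atTop, exp (negEulerChar p * (n * log n) - A * n) ≤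
      subgroupCount (CyclicFreeProduct m p) n := by
  have : Nontrivial (Fin m) := Fin.nontrivial_iff_two_le.2 hm
  obtain ⟨a, b, hab, hle⟩ := exists_ne_and_apply_le p
  obtain ⟨K, hK⟩ := exists_hasSkeleton_fin hab (hp a) hle
  refine ⟨K + ∑ i, ((p i : ℝ) + 2), ?_⟩
  filter_upwards [eventually_ge_atTop K, eventually_ne_atTop 0] with n hn hn0
  have : NeZero n := ⟨hn0⟩
  obtain ⟨c, ⟨V, σ, hσ, hV, hsupport⟩, hcost⟩ := hK n hn
  obtain rfl : V = Finset.univ := Finset.eq_univ_of_card V (by rw [hV, Fintype.card_fin])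
  have hcost_log : (∑ i, (((p i - 1 : ℕ) * c i : ℕ) : ℝ)) * log n ≤ n * log n + K * n :=
    calc (∑ i, (((p i - 1 : ℕ) * c i : ℕ) : ℝ)) * log n ≤ (n + K) * log n := by
          gcongr
          exact_mod_cast hcost
      _ ≤ n * log n + K * n := by
          rw [add_mul]
          gcongr
          exact log_le_self n.cast_nonneg
  calc exp (negEulerChar p * (n * log n) - (K + ∑ i, ((p i : ℝ) + 2)) * n)
      ≤ exp (∑ i, ((1 - 1 / p i) * (n * log n) - ((p i - 1 : ℕ) * c i : ℕ) * log n -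
          (p i + 2) * n)) := by
        rw [exp_le_exp, Finset.sum_sub_distrib, Finset.sum_sub_distrib, ← Finset.sum_mul,
          ← Finset.sum_mul, ← Finset.sum_mul, negEulerChar]
        linarith
    _ ≤ ∏ i, (Nat.card {τ : Perm (Fin n) // (σ i).Disjoint τ ∧ τ ^ p i = 1} : ℝ) := by
        rw [exp_sum]
        gcongr with i
        simpa only [Fintype.card_fin] using exp_le_card_disjoint_pow_eq_one (hp i) (hsupport i)
    _ ≤ subgroupCount (CyclicFreeProduct m p) n := by
        exact_mod_cast Fintype.card_fin n ▸ hσ.prod_card_le_subgroupCount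

end GrowthOfCyclicFreeProduct

section NegligibleDivisors

open Real

lemma tendsto_exp_mul_sub_mul_log {c : ℝ} (hc : 0 < c) (A : ℝ) :
    Tendsto (fun n : ℕ => exp (A * n - c * (n * log n))) atTop (𝓝 0) := by
  have hlog : Tendsto (fun n : ℕ => c * log n - A) atTop atTop :=
    tendsto_atTop_add_const_right _ _
      ((tendsto_log_atTop.comp tendsto_natCast_atTop_atTop).const_mul_atTop hc)
  refine (tendsto_exp_neg_atTop_nhds_zero.comp
    (tendsto_natCast_atTop_atTop.atTop_mul_atTop₀ hlog)).congr fun n => ?_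
  rw [Function.comp_apply]
  ring_nf

lemma natCast_div_pow_le_exp (n k r : ℕ) : ((n / k : ℕ) : ℝ) ^ (k * r) ≤ exp (r * n) := by
  rcases Nat.eq_zero_or_pos k with rfl | hk
  · simpa using mul_nonneg r.cast_nonneg n.cast_nonneg
  calc ((n / k : ℕ) : ℝ) ^ (k * r) ≤ exp (n / k) ^ (k * r) := by
        gcongr
        linarith [add_one_le_exp ((n : ℝ) / k), Nat.cast_div_le (α := ℝ) (m := n) (n := k)]
    _ = exp (r * n) := by
        rw [← exp_nat_mul]
        push_cast
        field_simp

variable {a b : ℕ → ℕ} {c A B : ℝ} {r : ℕ}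

lemma pow_mul_le_exp_of_mem_properDivisors (hc : 0 ≤ c) (hB : 0 ≤ B)
    (ha : ∀ n ≠ 0, (a n : ℝ) ≤ exp (c * (n * log n) + B * n)) {n k : ℕ}
    (hk : k ∈ n.properDivisors) :
    (((n / k) ^ (k * r) * a k : ℕ) : ℝ) ≤ exp (c / 2 * (n * log n) + (B + r) * n) := by
  obtain ⟨hdvd, hlt⟩ := Nat.mem_properDivisors.1 hk
  have hk0 : 0 < k := Nat.pos_of_mem_properDivisors hk
  have hhalf : (k : ℝ) ≤ n / 2 := by
    obtain ⟨d, rfl⟩ := hdvd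
    have hd : 2 ≤ d := by
      by_contra! hd
      interval_cases d <;> omega
    rw [le_div_iff₀ two_pos]
    exact_mod_cast Nat.mul_le_mul_left k hd
  have hhalf_log : (k : ℝ) * log k ≤ n / 2 * log n := by gcongr
  calc (((n / k) ^ (k * r) * a k : ℕ) : ℝ) = ((n / k : ℕ) : ℝ) ^ (k * r) * a k := by push_cast; rfl
    _ ≤ exp (r * n) * exp (c * (n / 2 * log n) + B * n) := by
        gcongr
        · exact natCast_div_pow_le_exp n k r
        · refine (ha k hk0.ne').trans ?_
          gcongr
    _ = exp (c / 2 * (n * log n) + (B + r) * n) := by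
        rw [← exp_add]
        ring_nf

lemma sum_properDivisors_le (hc : 0 ≤ c) (hB : 0 ≤ B)
    (ha : ∀ n ≠ 0, (a n : ℝ) ≤ exp (c * (n * log n) + B * n)) (n : ℕ) :
    ((∑ k ∈ n.properDivisors, (n / k) ^ (k * r) * a k : ℕ) : ℝ) ≤
      exp (c / 2 * (n * log n) + (B + r + 1) * n) := by
  have hcard : (n.properDivisors.card : ℝ) ≤ exp n :=
    calc (n.properDivisors.card : ℝ) ≤ n := by
          exact_mod_cast (Finset.card_filter_le _ _).trans (by simp)
      _ ≤ exp n := by linarith [add_one_le_exp (n : ℝ)]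
  calc ((∑ k ∈ n.properDivisors, (n / k) ^ (k * r) * a k : ℕ) : ℝ)
      ≤ n.properDivisors.card * exp (c / 2 * (n * log n) + (B + r) * n) := by
        rw [Nat.cast_sum, ← nsmul_eq_mul]
        exact Finset.sum_le_card_nsmul _ _ _ fun k =>
          pow_mul_le_exp_of_mem_properDivisors hc hB ha
    _ ≤ exp n * exp (c / 2 * (n * log n) + (B + r) * n) := by gcongr
    _ = exp (c / 2 * (n * log n) + (B + r + 1) * n) := by
        rw [← exp_add]
        ring_nf

theorem tendsto_div_one_of_le_sum_divisors (hc : 0 < c) (hB : 0 ≤ B)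
    (hab : ∀ n ≠ 0, a n ≤ b n)
    (hba : ∀ n ≠ 0, b n ≤ ∑ k ∈ n.divisors, (n / k) ^ (k * r) * a k)
    (hupper : ∀ n ≠ 0, (a n : ℝ) ≤ exp (c * (n * log n) + B * n))
    (hlower : ∀ᶠ n : ℕ in atTop, exp (c * (n * log n) - A * n) ≤ a n) :
    Tendsto (fun n => (b n : ℝ) / a n) atTop (𝓝 1) := by
  have herror := (tendsto_exp_mul_sub_mul_log (half_pos hc) (A + B + r + 1)).const_add 1
  rw [add_zero] at herror
  refine tendsto_of_tendsto_of_tendsto_of_le_of_le' tendsto_const_nhds herror ?_ ?_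
  · filter_upwards [hlower, eventually_ne_atTop 0] with n hn hn0
    rw [one_le_div ((exp_pos _).trans_le hn)]
    exact_mod_cast hab n hn0
  · filter_upwards [hlower, eventually_ne_atTop 0] with n hn hn0
    have hsplit : b n ≤ ∑ k ∈ n.properDivisors, (n / k) ^ (k * r) * a k + a n := by
      have hle := hba n hn0
      rwa [← Nat.cons_self_properDivisors hn0, Finset.sum_cons, add_comm,
        Nat.div_self (Nat.pos_of_ne_zero hn0), one_pow, one_mul] at hle
    rw [div_le_iff₀ ((exp_pos _).trans_le hn)]
    calc (b n : ℝ) ≤ exp (c / 2 * (n * log n) + (B + r + 1) * n) + a n :=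
          (by exact_mod_cast hsplit : (b n : ℝ) ≤ _).trans
            (add_le_add_left (sum_properDivisors_le hc.le hB hupper n) _)
      _ = exp ((A + B + r + 1) * n - c / 2 * (n * log n)) * exp (c * (n * log n) - A * n) +
            a n := by
          rw [← exp_add]
          ring_nf
      _ ≤ exp ((A + B + r + 1) * n - c / 2 * (n * log n)) * a n + a n := by gcongr
      _ = (1 + exp ((A + B + r + 1) * n - c / 2 * (n * log n))) * a n := by ring

end NegligibleDivisors

theorem subgroup_growth_comparison (m : ℕ) (p : Fin m → ℕ) (hp : ∀ i, 2 ≤ p i)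
    (h : ∑ i, (1 : ℝ) / (p i : ℝ) < (m : ℝ) - 1) :
    Filter.Tendsto (fun n : ℕ =>
      (subgroupCount (TorusKnotGroup m p) n : ℝ) /
        (subgroupCount (CyclicFreeProduct m p) n : ℝ))
      Filter.atTop (𝓝 1) := by
  have hm : 2 ≤ m := by
    have hsum : 0 ≤ ∑ i, (1 : ℝ) / (p i : ℝ) := Finset.sum_nonneg fun i _ => by positivity
    exact_mod_cast (by linarith : (1 : ℝ) < m)
  have hχ : 0 < negEulerChar p := by
    rw [negEulerChar, Finset.sum_sub_distrib, Fin.sum_const, nsmul_one]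
    linarith
  obtain ⟨A, hlower⟩ := eventually_le_subgroupCount_cyclicFreeProduct hm hp
  have hπ := TorusKnotGroup.toCyclicFreeProduct_surjective (p := p)
  let i : Fin m := ⟨0, by omega⟩
  exact tendsto_div_one_of_le_sum_divisors hχ (by positivity)
    (fun n hn => subgroupCount_le_of_surjective hπ hn)
    (fun n hn => subgroupCount_le_sum_divisors hπ (TorusKnotGroup.of_pow_mem_center i)
      (TorusKnotGroup.ker_toCyclicFreeProduct i) hn)
    (fun n hn => subgroupCount_cyclicFreeProduct_le (fun i => two_pos.trans_le (hp i)) hn) hlower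
end

section
/- Let p_1,…,p_m ∈ ℕ with each p_i ≥ 2 and Σ_{i=1}^m 1/p_i < m−1. Then h_n(Γ_{p_1,…,p_m}) ∼ t_n(Γ_{p_1,…,p_m}) as n → ∞; that is, the proportion of homomorphisms Γ_{p_1,…,p_m} → S_n whose image acts transitively on {1,…,n} tends to 1. -/
open Filter Topology Asymptotics
open scoped TensorProduct

/-- `t_n(G)`: the number of homomorphisms `G → S_n` whose image acts transitively -/
noncomputable def transitiveHomCount (G : Type*) [Group G] (n : ℕ) : ℕ :=
  Nat.card {φ : G →* Equiv.Perm (Fin n) // ∀ x y : Fin n, ∃ g : G, φ g x = y}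

/-!
Let `z` be the common value `x_i ^ p_i`, which is central. The homomorphisms `Γ → S_n` killing `z`
number `w_n = ∏ i, #{x ∈ S_n | x ^ p_i = 1}`. Put `a_n = w_n / n!`.

For `x` uniform among the permutations with `x ^ p = 1`, the mean number of fixed points on `n + 1`
points is the ratio `ρ_n` of consecutive densities of such permutations. By Cauchy–Schwarz
`ρ_{n+1} ≤ ρ_n + 1`, and the recursion over the length of the cycle through a point then forces
`ρ_n ∼ n ^ (1 / p)`. Hence `a_{n+1} / a_n ∼ n ^ δ` with `δ = m - 1 - ∑ 1 / p_i > 0`, so that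
`a_k a_l (k+l choose k) ^ (δ / 2) ≤ K a_{k+l}`.

The points moved by `z` form an invariant set, so an arbitrary homomorphism splits into one where
`z` has no fixed point and one killing `z`. If `z` acts as a permutation `ζ` of `k` points without
fixed points, then `ζ` has at most `k / 2` cycles and a `p_i`-th root of it is determined, up to
`2 ^ k` choices, by a solution of `x ^ p_i = 1` on these cycles; summing over `ζ` with Burnside's
lemma shows that such homomorphisms are too few to matter, and `h_n / n! ≤ L a_n`. An intransitive
homomorphism splits along an invariant set of size `0 < k < n`, so by the inequality for `a` the
proportion of those is at most a constant times `∑ (n choose k) ^ (-δ / 2) → 0`.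
-/

section TorsionCount

open Equiv Finset

/-- The number of permutations `x` of `n` points with `x ^ p = 1`. -/
def torsionCount (p n : ℕ) : ℕ := #{x : Perm (Fin n) | x ^ p = 1}

theorem torsionCount_pos (p n : ℕ) : 0 < torsionCount p n :=
  card_pos.mpr ⟨1, by simp⟩

theorem card_torsion_perm (p : ℕ) (α : Type*) [Finite α] :
    Nat.card {x : Perm α // x ^ p = 1} = torsionCount p (Nat.card α) := by
  rw [torsionCount, ← Fintype.card_subtype, ← Nat.card_eq_fintype_card]
  refine Nat.card_congr ((Finite.equivFin α).permCongrHom.toEquiv.subtypeEquiv fun x => ?_)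
  rw [MulEquiv.toEquiv_eq_coe, MulEquiv.coe_toEquiv, ← map_pow, MulEquiv.map_eq_one_iff]

theorem compl_pow_eq_one_iff {α : Type*} {p : ℕ} {s : Set α} [DecidablePred (· ∈ s)]
    {τ : Perm s} (hτ : τ ^ p = 1) (x : {x : Perm α // ∀ a : s, x a = τ a}) :
    (Equiv.Set.compl τ x : Perm (sᶜ : Set α)) ^ p = 1 ↔ x.1 ^ p = 1 := by
  have inside (k : ℕ) (a : s) : (x.1 ^ k) a = (τ ^ k) a := by
    induction k with
    | zero => rfl
    | succ k ih => rw [pow_succ', pow_succ', Perm.mul_apply, ih, x.2, Perm.mul_apply]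
  have outside (k : ℕ) (a : (sᶜ : Set α)) :
      (((Equiv.Set.compl τ x : Perm (sᶜ : Set α)) ^ k) a : α) = (x.1 ^ k) a := by
    induction k with
    | zero => rfl
    | succ k ih => rw [pow_succ', pow_succ', Perm.mul_apply, Perm.mul_apply, ← ih]; rfl
  constructor <;> intro h <;> ext a
  · by_cases ha : a ∈ s
    · simpa [hτ] using inside p ⟨a, ha⟩
    · simpa [h] using (outside p ⟨a, ha⟩).symm
  · simpa [h] using outside p a

variable {α ι : Type*} [Fintype α] [DecidableEq α] [Fintype ι] {p : ℕ}

theorem card_torsion_extending {σ : Perm ι} (hσ : σ ^ p = 1) (e : ι ↪ α) :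
    #{x : Perm α | x ^ p = 1 ∧ ∀ i, x (e i) = e (σ i)} =
      torsionCount p (Fintype.card α - Fintype.card ι) := by
  classical
  let E : ι ≃ Set.range e := Equiv.ofInjective e e.injective
  let τ : Perm (Set.range e) := E.permCongrHom σ
  have hτ : τ ^ p = 1 := by rw [← map_pow, hσ, map_one]
  have extends_iff (x : Perm α) :
      (∀ i, x (e i) = e (σ i)) ↔ ∀ a : Set.range e, x a = τ a := by
    rw [← E.forall_congr_right]
    simp [E, τ, Equiv.permCongr_apply]
  have card_compl : Nat.card ((Set.range e)ᶜ : Set α) = Fintype.card α - Fintype.card ι := by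
    rw [Nat.card_eq_fintype_card, Fintype.card_compl_set, Set.card_range_of_injective e.injective]
  rw [← card_compl, ← card_torsion_perm, ← Fintype.card_subtype, ← Nat.card_eq_fintype_card]
  refine Nat.card_congr ?_
  calc {x : Perm α // x ^ p = 1 ∧ ∀ i, x (e i) = e (σ i)}
      ≃ {x : {x : Perm α // ∀ a : Set.range e, x a = τ a} // x.1 ^ p = 1} :=
        (Equiv.subtypeEquivRight fun x => by rw [extends_iff, and_comm]).trans
          (Equiv.subtypeSubtypeEquivSubtypeInter _ _).symm
    _ ≃ {y : Perm ((Set.range e)ᶜ : Set α) // y ^ p = 1} :=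
        (Equiv.Set.compl τ).subtypeEquiv fun x => (compl_pow_eq_one_iff hτ x).symm

variable (α) in
theorem sum_card_equivariant_embeddings {σ : Perm ι} (hσ : σ ^ p = 1) :
    ∑ x : Perm α with x ^ p = 1, #{e : ι ↪ α | ∀ i, x (e i) = e (σ i)} =
      (Fintype.card α).descFactorial (Fintype.card ι) *
        torsionCount p (Fintype.card α - Fintype.card ι) := by
  calc ∑ x : Perm α with x ^ p = 1, #{e : ι ↪ α | ∀ i, x (e i) = e (σ i)}
      = ∑ e : ι ↪ α, #{x : Perm α | x ^ p = 1 ∧ ∀ i, x (e i) = e (σ i)} := by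
        simp_rw [← filter_filter]
        exact sum_card_bipartiteAbove_eq_sum_card_bipartiteBelow _
    _ = _ := by simp [card_torsion_extending hσ, Fintype.card_embedding_eq]

theorem card_fixed_embeddings (x : Perm α) :
    #{e : ι ↪ α | ∀ i, x (e i) = e ((1 : Perm ι) i)} =
      (#{a | x a = a}).descFactorial (Fintype.card ι) := by
  rw [← Fintype.card_subtype, ← Fintype.card_subtype, ← Fintype.card_embedding_eq]
  exact Fintype.card_congr (Equiv.codRestrict ι {a | x a = a})

variable (α p) in
theorem sum_descFactorial_card_fixed (d : ℕ) :
    ∑ x : Perm α with x ^ p = 1, (#{a | x a = a}).descFactorial d =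
      (Fintype.card α).descFactorial d * torsionCount p (Fintype.card α - d) := by
  have h := sum_card_equivariant_embeddings α (one_pow (M := Perm (Fin d)) p)
  simpa only [card_fixed_embeddings, Fintype.card_fin] using h

theorem iterate_cycle_embedding {β : Type*} {d : ℕ} {x : Perm β} {e : ZMod d ↪ β}
    (he : ∀ i, x (e i) = e (i + 1)) (k : ℕ) : x^[k] (e 0) = e k := by
  induction k with
  | zero => simp
  | succ k ih => rw [Function.iterate_succ_apply', ih, he, Nat.cast_succ]

theorem minimalPeriod_cycle_embedding {β : Type*} {d : ℕ} {x : Perm β} {e : ZMod d ↪ β}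
    (he : ∀ i, x (e i) = e (i + 1)) : Function.minimalPeriod x (e 0) = d := by
  refine Nat.dvd_antisymm (Function.IsPeriodicPt.minimalPeriod_dvd ?_) ?_
  · rw [Function.IsPeriodicPt, Function.IsFixedPt, iterate_cycle_embedding he,
      ZMod.natCast_self]
  · rw [← ZMod.natCast_eq_zero_iff, ← e.injective.eq_iff, ← iterate_cycle_embedding he,
      Function.iterate_minimalPeriod]

theorem exists_cycle_embedding {β : Type*} {d : ℕ} [NeZero d] {x : Perm β} {a : β}
    (ha : Function.minimalPeriod x a = d) :
    ∃ e : ZMod d ↪ β, (∀ i, x (e i) = e (i + 1)) ∧ e 0 = a := by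
  refine ⟨⟨fun i => x^[i.val] a, fun i j hij => ZMod.val_injective d ?_⟩, fun i => ?_, ?_⟩
  · exact (Function.iterate_eq_iterate_iff_of_lt_minimalPeriod
      (ha.symm ▸ i.val_lt) (ha.symm ▸ j.val_lt)).mp hij
  · change x (x^[i.val] a) = x^[(i + 1).val] a
    rw [← Function.iterate_succ_apply' x, ← Function.iterate_mod_minimalPeriod_eq, ha,
      ZMod.val_add, ZMod.val_one_eq_one_mod, Nat.add_mod_mod]
  · change x^[(0 : ZMod d).val] a = a
    rw [ZMod.val_zero, Function.iterate_zero_apply]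

theorem card_cycle_embeddings (d : ℕ) [NeZero d] (x : Perm α) :
    #{e : ZMod d ↪ α | ∀ i, x (e i) = e (Equiv.addRight 1 i)} =
      #{a | Function.minimalPeriod x a = d} := by
  refine card_bij (fun e _ => e 0) (fun e he => ?_) (fun e he e' he' h0 => ?_) fun a ha => ?_
  · exact mem_filter.mpr ⟨mem_univ _, minimalPeriod_cycle_embedding (mem_filter.mp he).2⟩
  · ext i
    rw [← ZMod.natCast_zmod_val i, ← iterate_cycle_embedding (mem_filter.mp he).2, h0,
      iterate_cycle_embedding (mem_filter.mp he').2]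
  · obtain ⟨e, he, he0⟩ := exists_cycle_embedding (mem_filter.mp ha).2
    exact ⟨e, mem_filter.mpr ⟨mem_univ _, he⟩, he0⟩

theorem addRight_one_pow_eq_one {d : ℕ} (hd : d ∣ p) : Equiv.addRight (1 : ZMod d) ^ p = 1 := by
  have pow_apply (k : ℕ) (i : ZMod d) : (Equiv.addRight (1 : ZMod d) ^ k) i = i + k := by
    induction k with
    | zero => simp
    | succ k ih => rw [pow_succ', Perm.mul_apply, ih]; simp [add_assoc]
  ext i
  rw [pow_apply, (ZMod.natCast_eq_zero_iff p d).mpr hd, add_zero, Perm.one_apply]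

variable (α) in
theorem sum_card_minimalPeriod_eq {d : ℕ} [NeZero d] (hd : d ∣ p) :
    ∑ x : Perm α with x ^ p = 1, #{a | Function.minimalPeriod x a = d} =
      (Fintype.card α).descFactorial d * torsionCount p (Fintype.card α - d) := by
  have h := sum_card_equivariant_embeddings α (addRight_one_pow_eq_one hd)
  simpa only [card_cycle_embeddings, ZMod.card] using h

theorem mul_torsionCount (hp : p ≠ 0) (n : ℕ) :
    n * torsionCount p n = ∑ d ∈ p.divisors, n.descFactorial d * torsionCount p (n - d) := by
  have period_dvd (x : Perm (Fin n)) (hx : x ^ p = 1) (a : Fin n) :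
      Function.minimalPeriod x a ∈ p.divisors := by
    refine Nat.mem_divisors.mpr ⟨Function.IsPeriodicPt.minimalPeriod_dvd ?_, hp⟩
    rw [Function.IsPeriodicPt, Function.IsFixedPt, ← Perm.coe_pow, hx, Perm.one_apply]
  symm
  calc ∑ d ∈ p.divisors, n.descFactorial d * torsionCount p (n - d)
      = ∑ d ∈ p.divisors, ∑ x : Perm (Fin n) with x ^ p = 1,
          #{a | Function.minimalPeriod x a = d} := by
        refine sum_congr rfl fun d hd => ?_
        have : NeZero d := ⟨(Nat.pos_of_mem_divisors hd).ne'⟩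
        simpa using (sum_card_minimalPeriod_eq (Fin n) (Nat.dvd_of_mem_divisors hd)).symm
    _ = ∑ x : Perm (Fin n) with x ^ p = 1, n := by
        rw [sum_comm]
        refine sum_congr rfl fun x hx => ?_
        rw [← card_eq_sum_card_fiberwise fun a _ => period_dvd x (mem_filter.mp hx).2 a,
          card_univ, Fintype.card_fin]
    _ = n * torsionCount p n := by rw [sum_const, smul_eq_mul, mul_comm, torsionCount]

theorem sq_mul_torsionCount_le (p n : ℕ) :
    ((n + 2) * torsionCount p (n + 1)) ^ 2 ≤ torsionCount p (n + 2) *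
      ((n + 2) * (n + 1) * torsionCount p n + (n + 2) * torsionCount p (n + 1)) := by
  let f (x : Perm (Fin (n + 2))) : ℕ := #{a | x a = a}
  have first_moment : ∑ x with x ^ p = 1, f x = (n + 2) * torsionCount p (n + 1) := by
    simpa using sum_descFactorial_card_fixed (Fin (n + 2)) p 1
  have second_moment : ∑ x with x ^ p = 1, f x ^ 2 =
      (n + 2) * (n + 1) * torsionCount p n + (n + 2) * torsionCount p (n + 1) := by
    rw [← first_moment]
    have falling : ∑ x with x ^ p = 1, (f x).descFactorial 2 =
        (n + 2) * (n + 1) * torsionCount p n := by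
      simpa [Nat.descFactorial_succ, mul_comm] using sum_descFactorial_card_fixed (Fin (n + 2)) p 2
    rw [← falling, ← sum_add_distrib]
    refine sum_congr rfl fun x _ => ?_
    cases f x <;> simp [Nat.descFactorial_succ]; ring
  rw [← second_moment, ← first_moment]
  exact sq_sum_le_card_mul_sum_sq

end TorsionCount

section TorsionDensity

open Finset

/-- The proportion of permutations `x` of `n` points with `x ^ p = 1`. -/
noncomputable def torsionDensity (p n : ℕ) : ℝ := torsionCount p n / n.factorial

/-- The ratio of consecutive torsion densities, which is also the expected number of fixed points
of a uniformly random permutation `x` of `n + 1` points with `x ^ p = 1`. -/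
noncomputable def torsionRatio (p n : ℕ) : ℝ := torsionDensity p n / torsionDensity p (n + 1)

variable {p : ℕ}

theorem torsionDensity_pos (p n : ℕ) : 0 < torsionDensity p n :=
  div_pos (mod_cast torsionCount_pos p n) (by positivity)

theorem torsionRatio_pos (p n : ℕ) : 0 < torsionRatio p n :=
  div_pos (torsionDensity_pos p n) (torsionDensity_pos p (n + 1))

theorem torsionCount_eq_factorial_mul_torsionDensity (p n : ℕ) :
    (torsionCount p n : ℝ) = n.factorial * torsionDensity p n := by
  rw [torsionDensity, mul_div_cancel₀ _ (by positivity)]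

theorem torsionCount_succ (p n : ℕ) :
    (torsionCount p (n + 1) : ℝ) = torsionCount p n * ((n + 1) / torsionRatio p n) := by
  have density_pos := torsionDensity_pos p n
  have density_succ_pos := torsionDensity_pos p (n + 1)
  rw [torsionCount_eq_factorial_mul_torsionDensity, torsionCount_eq_factorial_mul_torsionDensity,
    torsionRatio, Nat.factorial_succ]
  push_cast
  field_simp

theorem mul_torsionDensity (hp : p ≠ 0) (n : ℕ) :
    n * torsionDensity p n = ∑ d ∈ p.divisors with d ≤ n, torsionDensity p (n - d) := by
  have count : (n : ℝ) * torsionCount p n =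
      ∑ d ∈ p.divisors, (n.descFactorial d : ℝ) * torsionCount p (n - d) :=
    mod_cast mul_torsionCount hp n
  rw [torsionDensity, ← mul_div_assoc, count, sum_div, sum_filter]
  refine sum_congr rfl fun d _ => ?_
  split_ifs with hd
  · rw [torsionDensity, ← Nat.factorial_mul_descFactorial hd]
    have : (n.descFactorial d : ℝ) ≠ 0 :=
      mod_cast Nat.descFactorial_eq_zero_iff_lt.not.mpr hd.not_gt
    push_cast
    field_simp
  · rw [Nat.descFactorial_of_lt (not_le.mp hd)]
    simp

theorem sq_torsionDensity_succ_le (p n : ℕ) :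
    torsionDensity p (n + 1) ^ 2 ≤
      torsionDensity p (n + 2) * (torsionDensity p n + torsionDensity p (n + 1)) := by
  have h : (((n + 2 : ℝ)) * torsionCount p (n + 1)) ^ 2 ≤ torsionCount p (n + 2) *
      ((n + 2) * (n + 1) * torsionCount p n + (n + 2) * torsionCount p (n + 1)) :=
    mod_cast sq_mul_torsionCount_le p n
  simp only [torsionCount_eq_factorial_mul_torsionDensity, Nat.factorial_succ] at h
  push_cast at h
  have : (0 : ℝ) < ((n + 2) * (n + 1) * n.factorial) ^ 2 := by positivity
  refine le_of_mul_le_mul_left ?_ this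
  linear_combination h

theorem torsionRatio_succ_le (p n : ℕ) : torsionRatio p (n + 1) ≤ torsionRatio p n + 1 := by
  have := torsionDensity_pos p (n + 1)
  rw [torsionRatio, torsionRatio, div_add_one this.ne',
    div_le_div_iff₀ (torsionDensity_pos _ _) this]
  linarith [sq_torsionDensity_succ_le p n]

theorem torsionRatio_add_le (p n k : ℕ) : torsionRatio p (n + k) ≤ torsionRatio p n + k := by
  induction k with
  | zero => simp
  | succ k ih =>
    rw [← add_assoc, Nat.cast_succ]
    linarith [torsionRatio_succ_le p (n + k)]

theorem prod_torsionRatio (p n k : ℕ) :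
    ∏ i ∈ range k, torsionRatio p (n + i) = torsionDensity p n / torsionDensity p (n + k) := by
  induction k with
  | zero => simp [(torsionDensity_pos p n).ne']
  | succ k ih =>
    rw [prod_range_succ, ih, torsionRatio, add_assoc n k 1,
      div_mul_div_cancel₀ (torsionDensity_pos p (n + k)).ne']

theorem torsionDensity_sub_le (hp : p ≠ 0) {d n : ℕ} (hd : d ∣ p) (hdn : d ≤ n) :
    torsionDensity p (n - d) ≤ n * torsionDensity p n := by
  rw [mul_torsionDensity hp]
  exact single_le_sum (f := fun d => torsionDensity p (n - d))
    (fun e _ => (torsionDensity_pos p (n - e)).le) (by simp [hd, hp, hdn])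

theorem torsionRatio_le_add_one (hp : p ≠ 0) (n : ℕ) : torsionRatio p n ≤ n + 1 := by
  rw [torsionRatio, div_le_iff₀ (torsionDensity_pos _ _)]
  simpa using torsionDensity_sub_le hp (one_dvd p) (Nat.le_add_left 1 n)

theorem prod_torsionRatio_le (hp : p ≠ 0) (n : ℕ) :
    ∏ i ∈ range p, torsionRatio p (n + i) ≤ n + p := by
  rw [prod_torsionRatio, div_le_iff₀ (torsionDensity_pos _ _)]
  simpa using torsionDensity_sub_le hp dvd_rfl (Nat.le_add_left p n)

theorem torsionRatio_le (hp : p ≠ 0) (n : ℕ) :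
    torsionRatio p n ≤ (n : ℝ) ^ (1 / p : ℝ) + p := by
  obtain hn | ⟨n, rfl⟩ := lt_or_ge n p |>.imp_right Nat.exists_eq_add_of_le'
  · have : (n : ℝ) + 1 ≤ p := mod_cast hn
    linarith [torsionRatio_le_add_one hp n, Real.rpow_nonneg n.cast_nonneg (1 / p : ℝ)]
  by_contra! h
  have ratio_ge (i : ℕ) (hi : i ∈ range p) :
      ((n + p : ℕ) : ℝ) ^ (1 / p : ℝ) < torsionRatio p (n + i) := by
    obtain ⟨k, rfl⟩ := Nat.exists_eq_add_of_le (mem_range.mp hi).le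
    have := torsionRatio_add_le (i + k) (n + i) k
    rw [add_assoc] at this
    push_cast at h ⊢
    linarith [i.cast_nonneg (α := ℝ)]
  refine (prod_torsionRatio_le hp n).not_gt ?_
  calc (n + p : ℝ) = ∏ _i ∈ range p, ((n + p : ℕ) : ℝ) ^ (1 / p : ℝ) := by
        rw [prod_const, card_range, one_div, Real.rpow_inv_natCast_pow (by positivity) hp]
        push_cast; rfl
    _ < ∏ i ∈ range p, torsionRatio p (n + i) :=
        prod_lt_prod_of_nonempty (fun i _ => by positivity) ratio_ge (by simpa using hp)

theorem torsionRatio_add_le_rpow (hp : p ≠ 0) {n k : ℕ} (hk : k ≤ p) :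
    torsionRatio p (n + k) ≤ (n + 1 : ℝ) ^ (1 / p : ℝ) + 2 * p := by
  have : (n : ℝ) ^ (1 / p : ℝ) ≤ (n + 1 : ℝ) ^ (1 / p : ℝ) := by gcongr; linarith
  have : (k : ℝ) ≤ p := mod_cast hk
  linarith [torsionRatio_add_le p n k, torsionRatio_le hp n]

theorem torsionDensity_div_le {U : ℝ} (hU : 1 ≤ U) {n d : ℕ}
    (hρ : ∀ i < p, torsionRatio p (n + i) ≤ U) (hd : d < p) :
    torsionDensity p (n + p - d) / torsionDensity p (n + p) ≤ U ^ (p - 1) := by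
  obtain ⟨k, rfl⟩ := Nat.exists_eq_add_of_le' hd.le
  have := prod_torsionRatio (k + d) (n + k) d
  rw [add_assoc] at this
  rw [← add_assoc, Nat.add_sub_cancel, add_assoc, ← this]
  calc ∏ i ∈ range d, torsionRatio (k + d) (n + k + i)
      ≤ ∏ _i ∈ range d, U := by
        refine prod_le_prod (fun i _ => (torsionRatio_pos _ _).le) fun i hi => ?_
        rw [add_assoc]
        exact hρ _ (by have := mem_range.mp hi; omega)
    _ ≤ U ^ (k + d - 1) := by
        rw [prod_const, card_range]
        exact pow_le_pow_right₀ hU (by omega)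

theorem prod_torsionRatio_ge {U : ℝ} (hU : 1 ≤ U) (hp : p ≠ 0) {n : ℕ}
    (hρ : ∀ i < p, torsionRatio p (n + i) ≤ U) :
    n + p - p * U ^ (p - 1) ≤ ∏ i ∈ range p, torsionRatio p (n + i) := by
  have hv := torsionDensity_pos p (n + p)
  have recursion : (n + p : ℝ) = ∏ i ∈ range p, torsionRatio p (n + i) +
      ∑ d ∈ p.properDivisors, torsionDensity p (n + p - d) / torsionDensity p (n + p) := by
    have h := mul_torsionDensity hp (n + p)
    rw [filter_true_of_mem fun d hd => (Nat.divisor_le hd).trans (Nat.le_add_left p n),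
      ← Nat.insert_self_properDivisors hp, sum_insert Nat.self_notMem_properDivisors,
      Nat.add_sub_cancel] at h
    rw [prod_torsionRatio, ← sum_div, ← add_div, ← h, mul_div_cancel_right₀ _ hv.ne',
      Nat.cast_add]
  have proper_le : ∑ d ∈ p.properDivisors, torsionDensity p (n + p - d) / torsionDensity p (n + p)
      ≤ p * U ^ (p - 1) :=
    calc _ ≤ #p.properDivisors • U ^ (p - 1) :=
          sum_le_card_nsmul _ _ _ fun d hd =>
            torsionDensity_div_le hU hρ (Nat.mem_properDivisors.mp hd).2
      _ ≤ p * U ^ (p - 1) := by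
          rw [nsmul_eq_mul]
          gcongr
          exact (card_filter_le _ _).trans (by simp)
  linarith

theorem le_torsionRatio (hp : p ≠ 0) (n : ℕ) :
    (n + 1) / ((n + 1 : ℝ) ^ (1 / p : ℝ) + 2 * p) ^ (p - 1) - p ≤ torsionRatio p n := by
  set U : ℝ := (n + 1 : ℝ) ^ (1 / p : ℝ) + 2 * p
  have one_le_p : (1 : ℝ) ≤ p := mod_cast Nat.one_le_iff_ne_zero.mpr hp
  have one_le_U : 1 ≤ U := by
    have : (0 : ℝ) ≤ (n + 1 : ℝ) ^ (1 / p : ℝ) := by positivity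
    simp only [U]; linarith
  have hρ (i : ℕ) (hi : i < p) : torsionRatio p (n + i) ≤ U := torsionRatio_add_le_rpow hp hi.le
  have prod_le : ∏ i ∈ range p, torsionRatio p (n + i) ≤ torsionRatio p n * U ^ (p - 1) := by
    obtain ⟨q, rfl⟩ := Nat.exists_eq_succ_of_ne_zero hp
    rw [prod_range_succ', mul_comm, Nat.succ_sub_one, ← card_range q, ← prod_const, card_range]
    refine mul_le_mul_of_nonneg_left ?_ (torsionRatio_pos _ _).le
    exact prod_le_prod (fun i _ => (torsionRatio_pos _ _).le) fun i hi => hρ _ (by simpa using hi)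
  rw [tsub_le_iff_right, div_le_iff₀ (by positivity), add_mul]
  linarith [prod_torsionRatio_ge one_le_U hp hρ]

theorem tendsto_div_add_const (c : ℝ) : Tendsto (fun x : ℝ => x / (x + c)) atTop (𝓝 1) := by
  have h : Tendsto (fun x : ℝ => 1 - c / (x + c)) atTop (𝓝 (1 - 0)) :=
    tendsto_const_nhds.sub
      (tendsto_const_nhds.div_atTop (tendsto_atTop_add_const_right _ c tendsto_id))
  rw [sub_zero] at h
  refine h.congr' ?_
  filter_upwards [eventually_gt_atTop (-c)] with x hx
  have : x + c ≠ 0 := by linarith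
  field_simp
  ring

theorem tendsto_pow_div_add_pow_sub_div (b c : ℝ) (q : ℕ) :
    Tendsto (fun x : ℝ => (x ^ (q + 1) / (x + b) ^ q - c) / x) atTop (𝓝 1) := by
  have h : Tendsto (fun x : ℝ => (x / (x + b)) ^ q - c / x) atTop (𝓝 (1 ^ q - 0)) :=
    ((tendsto_div_add_const b).pow q).sub (tendsto_const_nhds.div_atTop tendsto_id)
  rw [one_pow, sub_zero] at h
  refine h.congr' ?_
  filter_upwards [eventually_ne_atTop 0] with x hx
  rw [div_pow, sub_div, pow_succ, mul_div_right_comm, mul_div_cancel_right₀ _ hx]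

theorem tendsto_torsionRatio_div_rpow (hp : p ≠ 0) :
    Tendsto (fun n : ℕ => torsionRatio p n / (n + 1 : ℝ) ^ (1 / p : ℝ)) atTop (𝓝 1) := by
  let x (n : ℕ) : ℝ := (n + 1 : ℝ) ^ (1 / p : ℝ)
  have x_pos (n : ℕ) : 0 < x n := by positivity
  have x_pow (n : ℕ) : x n ^ p = n + 1 := by
    simp only [x]
    rw [one_div, Real.rpow_inv_natCast_pow (by positivity) hp]
  have x_atTop : Tendsto x atTop atTop :=
    (tendsto_rpow_atTop (by positivity)).comp
      (tendsto_atTop_add_const_right _ 1 tendsto_natCast_atTop_atTop)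
  have lower := (tendsto_pow_div_add_pow_sub_div (2 * p) p (p - 1)).comp x_atTop
  have upper : Tendsto (fun n => 1 + p / x n) atTop (𝓝 1) := by
    simpa using (tendsto_const_nhds.div_atTop x_atTop).const_add (1 : ℝ)
  refine tendsto_of_tendsto_of_tendsto_of_le_of_le lower upper (fun n => ?_) fun n => ?_
  · rw [Function.comp_apply, Nat.sub_add_cancel (Nat.pos_of_ne_zero hp), x_pow]
    exact div_le_div_of_nonneg_right (le_torsionRatio hp n) (x_pos n).le
  · rw [div_le_iff₀ (x_pos n), add_mul, one_mul, div_mul_cancel₀ _ (x_pos n).ne']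
    refine (torsionRatio_le hp n).trans ?_
    gcongr
    exact Real.rpow_le_rpow (by positivity) (by linarith) (by positivity)

end TorsionDensity

section Binomial

theorem two_pow_le_choose_add {k l : ℕ} (h : k ≤ l) : 2 ^ k ≤ (k + l).choose k := by
  induction k with
  | zero => simp
  | succ k ih =>
    have absorption := Nat.add_one_mul_choose_eq (k + l) k
    refine Nat.le_of_mul_le_mul_left ?_ k.succ_pos
    calc (k + 1) * 2 ^ (k + 1) = (2 * (k + 1)) * 2 ^ k := by ring
      _ ≤ (k + l + 1) * (k + l).choose k := Nat.mul_le_mul (by omega) (ih (by omega))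
      _ = (k + 1) * (k + 1 + l).choose (k + 1) := by rw [absorption, mul_comm, add_right_comm]

theorem le_choose_of_mem_Ioo {n k : ℕ} (hk : k ∈ Finset.Ioo 0 n) : n ≤ n.choose k := by
  induction n generalizing k with
  | zero => simp at hk
  | succ n ih =>
    obtain ⟨hk0, hkn⟩ := Finset.mem_Ioo.mp hk
    obtain ⟨k, rfl⟩ := Nat.exists_eq_succ_of_ne_zero hk0.ne'
    obtain rfl | hlt := (Nat.lt_succ_iff.mp hkn).eq_or_lt
    · simp
    · rw [Nat.choose_succ_succ, add_comm]
      exact Nat.add_le_add (Nat.choose_pos (by omega)) (ih (Finset.mem_Ioo.mpr ⟨hk0, hlt⟩))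

theorem rpow_factorial_add (k l : ℕ) (δ : ℝ) : ((k + l).factorial : ℝ) ^ δ =
    ((k + l).choose k : ℝ) ^ δ * ((k.factorial : ℝ) ^ δ * (l.factorial : ℝ) ^ δ) := by
  rw [← Real.mul_rpow (by positivity) (by positivity),
    ← Real.mul_rpow (by positivity) (by positivity), ← mul_assoc]
  exact mod_cast congrArg (fun x : ℕ => (x : ℝ) ^ δ)
    (Nat.choose_symm_add ▸ Nat.add_choose_mul_factorial_mul_factorial k l).symm

theorem inv_choose_rpow_le {ε : ℝ} (hε : 0 < ε) {n k : ℕ} (hk : k ∈ Finset.Ioo 0 n) :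
    ((n.choose k : ℝ) ^ ε)⁻¹ ≤
      ((n : ℝ) ^ (ε / 2))⁻¹ * (((2 : ℝ) ^ (-(ε / 2))) ^ k + ((2 : ℝ) ^ (-(ε / 2))) ^ (n - k)) := by
  obtain ⟨hk0, hkn⟩ := Finset.mem_Ioo.mp hk
  have n_pos : (0 : ℝ) < n := mod_cast hk0.trans hkn
  have two_pow_min : ((2 : ℝ) ^ min k (n - k)) ≤ n.choose k := by
    rcases le_total k (n - k) with h | h
    · have := two_pow_le_choose_add h
      rw [Nat.add_sub_cancel' hkn.le] at this
      rw [min_eq_left h]; exact mod_cast this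
    · have := two_pow_le_choose_add h
      rw [Nat.sub_add_cancel hkn.le, Nat.choose_symm hkn.le] at this
      rw [min_eq_right h]; exact mod_cast this
  have le_choose : (n : ℝ) ≤ n.choose k := mod_cast le_choose_of_mem_Ioo hk
  calc ((n.choose k : ℝ) ^ ε)⁻¹
      = ((n.choose k : ℝ) ^ (ε / 2))⁻¹ * ((n.choose k : ℝ) ^ (ε / 2))⁻¹ := by
        rw [← mul_inv, ← Real.rpow_add (n_pos.trans_le le_choose), add_halves]
    _ ≤ ((n : ℝ) ^ (ε / 2))⁻¹ * (((2 : ℝ) ^ min k (n - k)) ^ (ε / 2))⁻¹ := by gcongr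
    _ = ((n : ℝ) ^ (ε / 2))⁻¹ * ((2 : ℝ) ^ (-(ε / 2))) ^ min k (n - k) := by
        rw [Real.rpow_neg zero_le_two, ← Real.rpow_pow_comm zero_le_two, inv_pow]
    _ ≤ _ := by
        gcongr
        rcases min_choice k (n - k) with h | h <;> rw [h]
        · exact le_add_of_nonneg_right (by positivity)
        · exact le_add_of_nonneg_left (by positivity)

theorem tendsto_sum_inv_choose_rpow {ε : ℝ} (hε : 0 < ε) :
    Tendsto (fun n : ℕ => ∑ k ∈ Finset.Ioo 0 n, ((n.choose k : ℝ) ^ ε)⁻¹) atTop (𝓝 0) := by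
  set r : ℝ := (2 : ℝ) ^ (-(ε / 2))
  have r_nonneg : 0 ≤ r := by positivity
  have r_lt_one : r < 1 := Real.rpow_lt_one_of_one_lt_of_neg one_lt_two (by linarith)
  have geom_le (n : ℕ) : ∑ k ∈ Finset.range (n + 1), r ^ k ≤ (1 - r)⁻¹ := by
    rw [← tsum_geometric_of_lt_one r_nonneg r_lt_one]
    exact (summable_geometric_of_lt_one r_nonneg r_lt_one).sum_le_tsum _
      fun k _ => pow_nonneg r_nonneg k
  have bound (n : ℕ) : ∑ k ∈ Finset.Ioo 0 n, ((n.choose k : ℝ) ^ ε)⁻¹ ≤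
      ((n : ℝ) ^ (ε / 2))⁻¹ * (2 * (1 - r)⁻¹) :=
    calc _ ≤ ∑ k ∈ Finset.Ioo 0 n, ((n : ℝ) ^ (ε / 2))⁻¹ * (r ^ k + r ^ (n - k)) :=
          Finset.sum_le_sum fun k hk => inv_choose_rpow_le hε hk
      _ ≤ ∑ k ∈ Finset.range (n + 1), ((n : ℝ) ^ (ε / 2))⁻¹ * (r ^ k + r ^ (n - k)) :=
          Finset.sum_le_sum_of_subset_of_nonneg (fun k hk => by simp at hk ⊢; omega)
            fun k _ _ => by positivity
      _ = ((n : ℝ) ^ (ε / 2))⁻¹ * (2 * ∑ k ∈ Finset.range (n + 1), r ^ k) := by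
          rw [← Finset.mul_sum, Finset.sum_add_distrib, two_mul,
            ← Finset.sum_range_reflect fun k => r ^ k]
          simp
      _ ≤ _ := by gcongr; exact geom_le n
  have vanish : Tendsto (fun n : ℕ => ((n : ℝ) ^ (ε / 2))⁻¹ * (2 * (1 - r)⁻¹)) atTop (𝓝 0) := by
    have := ((tendsto_rpow_atTop (half_pos hε)).comp
      tendsto_natCast_atTop_atTop).inv_tendsto_atTop.mul_const (2 * (1 - r)⁻¹)
    simpa using this
  exact squeeze_zero (fun n => by positivity) bound vanish

end Binomial

section Ratio

variable {a : ℕ → ℝ}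

theorem exists_le_mul_of_eventually_le_succ (hpos : ∀ n, 0 < a n)
    (hmono : ∀ᶠ n in atTop, a n ≤ a (n + 1)) : ∃ C > 0, ∀ ⦃m n⦄, m ≤ n → a m ≤ C * a n := by
  obtain ⟨N, hN⟩ := eventually_atTop.mp hmono
  have le_of_ge {m n : ℕ} (hm : N ≤ m) (hmn : m ≤ n) : a m ≤ a n :=
    Nat.le_induction le_rfl (fun k hk ih => ih.trans (hN k (hm.trans hk))) n hmn
  obtain ⟨M, hM⟩ := ((Finset.range (N + 1) ×ˢ Finset.range (N + 1)).image
    fun ij => a ij.1 / a ij.2).exists_le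
  have ratio_le {i j : ℕ} (hi : i ≤ N) (hj : j ≤ N) : a i / a j ≤ max 1 M :=
    (hM _ <| Finset.mem_image.mpr ⟨(i, j), by simp; omega, rfl⟩).trans (le_max_right 1 M)
  refine ⟨max 1 M, by positivity, fun m n hmn => ?_⟩
  rcases le_total N m with hm | hm
  · exact (le_of_ge hm hmn).trans (le_mul_of_one_le_left (hpos n).le (le_max_left 1 M))
  · calc a m ≤ max 1 M * a (min n N) := (div_le_iff₀ (hpos _)).mp (ratio_le hm (min_le_right n N))
      _ ≤ max 1 M * a n := by
        gcongr
        rcases le_total n N with h | h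
        · rw [min_eq_left h]
        · rw [min_eq_right h]; exact le_of_ge le_rfl h

theorem exists_mul_pow_sub_le_of_tendsto_ratio_atTop (hpos : ∀ n, 0 < a n)
    (hratio : Tendsto (fun n => a (n + 1) / a n) atTop atTop) {D : ℝ} (hD : 0 < D) :
    ∃ C > 0, ∀ ⦃m n⦄, m ≤ n → a m * D ^ (n - m) ≤ C * a n := by
  obtain ⟨C, hC, hle⟩ := exists_le_mul_of_eventually_le_succ (a := fun n => a n / D ^ n)
    (fun n => div_pos (hpos n) (by positivity)) (by
      filter_upwards [hratio.eventually_ge_atTop D] with n hn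
      rw [le_div_iff₀ (hpos n)] at hn
      rw [div_le_div_iff₀ (by positivity) (by positivity), pow_succ]
      nlinarith [pow_pos hD n])
  refine ⟨C, hC, fun m n hmn => ?_⟩
  have := hle hmn
  rw [← mul_div_assoc, div_le_div_iff₀ (by positivity) (by positivity),
    ← Nat.sub_add_cancel hmn, pow_add, ← mul_assoc, Nat.sub_add_cancel hmn] at this
  exact le_of_mul_le_mul_right this (by positivity)

theorem exists_mul_le_pow_mul_add_of_tendsto_ratio_one (hpos : ∀ n, 0 < a n)
    (hratio : Tendsto (fun n => a (n + 1) / a n) atTop (𝓝 1)) {L : ℝ} (hL : 1 < L) :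
    ∃ K > 0, ∀ k l, a k * a l ≤ K * L ^ k * a (k + l) := by
  obtain ⟨μ, hμ, rfl⟩ : ∃ μ, 1 < μ ∧ L = μ ^ 2 :=
    ⟨√L, Real.lt_sqrt_of_sq_lt (by simpa), (Real.sq_sqrt (by linarith)).symm⟩
  have μ_pos : 0 < μ := by linarith
  obtain ⟨C, hC, hdecay⟩ := exists_le_mul_of_eventually_le_succ (a := fun n => μ ^ n * a n)
    (fun n => mul_pos (by positivity) (hpos n)) (by
      filter_upwards [hratio.eventually_const_le (inv_lt_one_of_one_lt₀ hμ)] with n hn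
      rw [le_div_iff₀ (hpos n), inv_mul_le_iff₀ μ_pos] at hn
      rw [pow_succ, mul_assoc]
      gcongr)
  obtain ⟨C', hC', hgrowth⟩ := exists_le_mul_of_eventually_le_succ (a := fun n => μ ^ n / a n)
    (fun n => div_pos (by positivity) (hpos n)) (by
      filter_upwards [hratio.eventually_le_const hμ] with n hn
      rw [div_le_iff₀ (hpos n)] at hn
      rw [div_le_div_iff₀ (hpos n) (hpos _), pow_succ, mul_assoc]
      gcongr)
  refine ⟨C * (C' * a 0), by have := hpos 0; positivity, fun k l => ?_⟩
  have le_shift : a l ≤ C * (μ ^ k * a (k + l)) := by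
    have := hdecay (Nat.le_add_left l k)
    rw [pow_add, mul_comm (μ ^ k), mul_assoc, mul_left_comm C] at this
    exact le_of_mul_le_mul_left this (by positivity)
  have le_pow : a k ≤ C' * a 0 * μ ^ k := by
    have := hgrowth k.zero_le
    rw [pow_zero, ← mul_div_assoc, div_le_div_iff₀ (hpos 0) (hpos k)] at this
    linarith
  calc a k * a l ≤ (C' * a 0 * μ ^ k) * (C * (μ ^ k * a (k + l))) :=
        mul_le_mul le_pow le_shift (hpos l).le ((hpos k).le.trans le_pow)
    _ = _ := by ring

theorem exists_mul_mul_choose_rpow_le (hpos : ∀ n, 0 < a n) {δ : ℝ} (hδ : 0 < δ)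
    (hratio : Tendsto (fun n : ℕ => a (n + 1) / a n / (n + 1 : ℝ) ^ δ) atTop (𝓝 1)) :
    ∃ K > 0, ∀ k l, a k * a l * ((k + l).choose k : ℝ) ^ (δ / 2) ≤ K * a (k + l) := by
  let b (n : ℕ) : ℝ := a n / (n.factorial : ℝ) ^ δ
  have b_pos (n : ℕ) : 0 < b n := div_pos (hpos n) (by positivity)
  have b_ratio : Tendsto (fun n => b (n + 1) / b n) atTop (𝓝 1) := by
    refine hratio.congr fun n => ?_
    simp only [b, Nat.factorial_succ, Nat.cast_mul, Nat.cast_succ]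
    rw [Real.mul_rpow (by positivity) (by positivity)]
    have := hpos n
    field_simp
  obtain ⟨K, hK, hb⟩ := exists_mul_le_pow_mul_add_of_tendsto_ratio_one b_pos b_ratio
    (Real.one_lt_rpow one_lt_two (half_pos hδ))
  refine ⟨K, hK, fun k l => ?_⟩
  wlog hkl : k ≤ l generalizing k l
  · rw [mul_comm (a k), add_comm, ← Nat.choose_symm_add]
    exact this l k (le_of_not_ge hkl)
  set c : ℝ := ((k + l).choose k : ℝ) ^ (δ / 2)
  have two_pow : ((2 : ℝ) ^ (δ / 2)) ^ k ≤ c := by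
    rw [Real.rpow_pow_comm zero_le_two]
    exact Real.rpow_le_rpow (by positivity) (mod_cast two_pow_le_choose_add hkl) (half_pos hδ).le
  have a_eq (n : ℕ) : a n = (n.factorial : ℝ) ^ δ * b n := by
    rw [mul_div_cancel₀ _ (by positivity)]
  calc a k * a l * c
      = (k.factorial : ℝ) ^ δ * (l.factorial : ℝ) ^ δ * c * (b k * b l) := by
        rw [a_eq, a_eq]; ring
    _ ≤ (k.factorial : ℝ) ^ δ * (l.factorial : ℝ) ^ δ * c * (K * c * b (k + l)) := by
        have := b_pos (k + l)
        refine mul_le_mul_of_nonneg_left ((hb k l).trans ?_) (by positivity)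
        gcongr
    _ = K * (c * c * ((k.factorial : ℝ) ^ δ * (l.factorial : ℝ) ^ δ) * b (k + l)) := by ring
    _ = K * a (k + l) := by
        rw [a_eq, rpow_factorial_add, ← Real.rpow_add_of_nonneg (by positivity) (half_pos hδ).le
          (half_pos hδ).le, add_halves]

theorem exists_le_mul_half_pow {G : ℕ → ℝ} (hpos : ∀ n, 0 < a n)
    (hratio : Tendsto (fun n => a (n + 1) / a n) atTop atTop) {B : ℝ} (hB : 1 ≤ B)
    (hG : ∀ n M, (∀ c, 2 * c ≤ n → a c ≤ M) → G n ≤ B ^ n * M) :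
    ∃ C > 0, ∀ n, G n ≤ C * a n * (1 / 2) ^ n := by
  obtain ⟨C, hC, ha⟩ := exists_mul_pow_sub_le_of_tendsto_ratio_atTop hpos hratio
    (show 0 < (2 * B) ^ 2 by positivity)
  refine ⟨C, hC, fun n => ?_⟩
  have half_le (c : ℕ) (hc : 2 * c ≤ n) : a c ≤ C * a n / (2 * B) ^ n := by
    rw [le_div_iff₀ (by positivity)]
    refine le_trans ?_ (ha (show c ≤ n by omega))
    rw [← pow_mul]
    have := (hpos c).le
    gcongr
    · linarith
    · omega
  calc G n ≤ B ^ n * (C * a n / (2 * B) ^ n) := hG n _ half_le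
    _ = C * a n * (1 / 2) ^ n := by
      rw [mul_pow, one_div, inv_pow]
      field_simp

theorem le_mul_of_le_convolution {G H : ℕ → ℝ} (hpos : ∀ n, 0 < a n) {C K : ℝ} (hC : 0 < C)
    (hK : 0 < K) (hmul : ∀ k l, a k * a l ≤ K * a (k + l))
    (hG : ∀ n, G n ≤ C * a n * (1 / 2) ^ n)
    (hH : ∀ n, H n ≤ ∑ k ∈ Finset.range (n + 1), G k * a (n - k)) (n : ℕ) :
    H n ≤ 2 * C * K * a n :=
  calc H n ≤ ∑ k ∈ Finset.range (n + 1), C * K * a n * (1 / 2) ^ k := by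
        refine (hH n).trans (Finset.sum_le_sum fun k hk => ?_)
        have := hmul k (n - k)
        rw [Nat.add_sub_cancel' (Finset.mem_range_succ_iff.mp hk)] at this
        calc G k * a (n - k) ≤ C * a k * (1 / 2) ^ k * a (n - k) := by
              have := (hpos (n - k)).le
              gcongr
              exact hG k
          _ = C * (1 / 2) ^ k * (a k * a (n - k)) := by ring
          _ ≤ C * (1 / 2) ^ k * (K * a n) := by gcongr
          _ = C * K * a n * (1 / 2) ^ k := by ring
    _ = C * K * a n * ∑ k ∈ Finset.range (n + 1), (1 / 2) ^ k := by rw [Finset.mul_sum]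
    _ ≤ C * K * a n * 2 := by
        have := (hpos n).le
        gcongr
        exact sum_geometric_two_le _
    _ = _ := by ring

theorem tendsto_sum_mul_sub_div {H : ℕ → ℝ} (hpos : ∀ n, 0 < a n) {ε K L : ℝ} (hε : 0 < ε)
    (hmul : ∀ k l, a k * a l * ((k + l).choose k : ℝ) ^ ε ≤ K * a (k + l))
    (hle : ∀ n, a n ≤ H n) (hL : ∀ n, H n ≤ L * a n) :
    Tendsto (fun n => (∑ k ∈ Finset.Ioo 0 n, H k * H (n - k)) / H n) atTop (𝓝 0) := by
  have H_pos (n : ℕ) : 0 < H n := (hpos n).trans_le (hle n)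
  have L_pos : 0 < L := pos_of_mul_pos_left ((H_pos 0).trans_le (hL 0)) (hpos 0).le
  have K_pos : 0 < K := by
    refine pos_of_mul_pos_left (lt_of_lt_of_le ?_ (hmul 0 0)) (hpos _).le
    have := hpos 0
    simp [this]
  have term_le {n k : ℕ} (hk : k ∈ Finset.Ioo 0 n) :
      H k * H (n - k) / H n ≤ L ^ 2 * K * ((n.choose k : ℝ) ^ ε)⁻¹ := by
    have hkn := (Finset.mem_Ioo.mp hk).2.le
    have choose_pos : (0 : ℝ) < n.choose k := mod_cast Nat.choose_pos hkn
    have h := hmul k (n - k)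
    rw [Nat.add_sub_cancel' hkn, ← le_div_iff₀ (by positivity)] at h
    rw [div_le_iff₀ (H_pos n)]
    calc H k * H (n - k) ≤ (L * a k) * (L * a (n - k)) :=
          mul_le_mul (hL k) (hL _) (H_pos _).le ((H_pos k).le.trans (hL k))
      _ = L ^ 2 * (a k * a (n - k)) := by ring
      _ ≤ L ^ 2 * (K * a n / (n.choose k : ℝ) ^ ε) := by gcongr
      _ = L ^ 2 * K * ((n.choose k : ℝ) ^ ε)⁻¹ * a n := by ring
      _ ≤ L ^ 2 * K * ((n.choose k : ℝ) ^ ε)⁻¹ * H n := by gcongr; exact hle n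
  refine squeeze_zero (fun n => div_nonneg
    (Finset.sum_nonneg fun k _ => (mul_pos (H_pos k) (H_pos _)).le) (H_pos n).le) (fun n => ?_)
    (by simpa using (tendsto_sum_inv_choose_rpow hε).const_mul (L ^ 2 * K))
  rw [Finset.sum_div, Finset.mul_sum]
  exact Finset.sum_le_sum fun k hk => term_le hk

theorem tendsto_div_of_le_add {H T R : ℕ → ℝ} (hpos : ∀ n, 0 < H n) (hTH : ∀ n, T n ≤ H n)
    (hH : ∀ n, H n ≤ T n + R n) (hR : Tendsto (fun n => R n / H n) atTop (𝓝 0)) :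
    Tendsto (fun n => H n / T n) atTop (𝓝 1) := by
  have lower : Tendsto (fun n => 1 - R n / H n) atTop (𝓝 1) := by simpa using hR.const_sub 1
  have key : Tendsto (fun n => T n / H n) atTop (𝓝 1) := by
    refine tendsto_of_tendsto_of_tendsto_of_le_of_le lower tendsto_const_nhds (fun n => ?_)
      fun n => (div_le_one (hpos n)).mpr (hTH n)
    rw [sub_le_iff_le_add, ← add_div, one_le_div (hpos n)]
    exact hH n
  simpa using key.inv₀ one_ne_zero

theorem tendsto_ratio_atTop_of_tendsto_div_rpow {δ : ℝ} (hδ : 0 < δ)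
    (hratio : Tendsto (fun n : ℕ => a (n + 1) / a n / (n + 1 : ℝ) ^ δ) atTop (𝓝 1)) :
    Tendsto (fun n => a (n + 1) / a n) atTop atTop := by
  have rpow_atTop : Tendsto (fun n : ℕ => (n + 1 : ℝ) ^ δ) atTop atTop :=
    (tendsto_rpow_atTop hδ).comp (tendsto_atTop_add_const_right _ 1 tendsto_natCast_atTop_atTop)
  refine (hratio.pos_mul_atTop one_pos rpow_atTop).congr fun n => ?_
  exact div_mul_cancel₀ _ (by positivity)

theorem tendsto_div_of_convolution_bounds {G H T : ℕ → ℝ} (hpos : ∀ n, 0 < a n)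
    {δ : ℝ} (hδ : 0 < δ)
    (hratio : Tendsto (fun n : ℕ => a (n + 1) / a n / (n + 1 : ℝ) ^ δ) atTop (𝓝 1))
    {B : ℝ} (hB : 1 ≤ B) (hG : ∀ n M, (∀ c, 2 * c ≤ n → a c ≤ M) → G n ≤ B ^ n * M)
    (hle : ∀ n, a n ≤ H n) (hH : ∀ n, H n ≤ ∑ k ∈ Finset.range (n + 1), G k * a (n - k))
    (hTH : ∀ n, T n ≤ H n) (hHT : ∀ n, H n ≤ T n + ∑ k ∈ Finset.Ioo 0 n, H k * H (n - k)) :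
    Tendsto (fun n => H n / T n) atTop (𝓝 1) := by
  obtain ⟨K, K_pos, mul_choose_le⟩ := exists_mul_mul_choose_rpow_le hpos hδ hratio
  have mul_le (k l : ℕ) : a k * a l ≤ K * a (k + l) := by
    refine (le_mul_of_one_le_right (mul_pos (hpos k) (hpos l)).le ?_).trans (mul_choose_le k l)
    exact Real.one_le_rpow (mod_cast Nat.choose_pos (Nat.le_add_right k l)) (by positivity)
  obtain ⟨C, C_pos, G_le⟩ :=
    exists_le_mul_half_pow hpos (tendsto_ratio_atTop_of_tendsto_div_rpow hδ hratio) hB hG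
  have H_le : ∀ n, H n ≤ 2 * C * K * a n :=
    le_mul_of_le_convolution hpos C_pos K_pos mul_le G_le hH
  exact tendsto_div_of_le_add (fun n => (hpos n).trans_le (hle n)) hTH hHT
    (tendsto_sum_mul_sub_div hpos (half_pos hδ) mul_choose_le hle H_le)

end Ratio

section PermutationRepresentations

open Equiv Finset

variable {G : Type*} [Group G] {α β : Type*}

instance finite_monoidHom_of_fg {H : Type*} [Group H] [Group.FG G] [Finite H] :
    Finite (G →* H) := by
  obtain ⟨S, hS⟩ := Group.fg_def.mp ‹Group.FG G›
  refine Finite.of_injective (fun φ (s : S) => φ s) fun φ ψ h => ?_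
  exact MonoidHom.eq_of_eqOn_dense hS fun s hs => congrFun h ⟨s, hs⟩

/-- `h_n(G)`: the number of homomorphisms `G → S_n`. -/
noncomputable def homCount (G : Type*) [Group G] (n : ℕ) : ℕ := Nat.card (G →* Perm (Fin n))

/-- The number of homomorphisms `G → S_n` under which `z` acts without fixed points. -/
noncomputable def fixedPointFreeHomCount (z : G) (n : ℕ) : ℕ :=
  Nat.card {φ : G →* Perm (Fin n) // ∀ a, φ z a ≠ a}

/-- The number of homomorphisms `G → S_n` that kill `z`. -/
noncomputable def trivialHomCount (z : G) (n : ℕ) : ℕ :=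
  Nat.card {φ : G →* Perm (Fin n) // φ z = 1}

/-- Relabelling the points of a permutation representation. -/
def homPermCongr (G : Type*) [Group G] (e : α ≃ β) : (G →* Perm α) ≃ (G →* Perm β) :=
  e.permCongrHom.monoidHomCongrRightEquiv

theorem card_hom_perm (G : Type*) [Group G] (α : Type*) [Finite α] :
    Nat.card (G →* Perm α) = homCount G (Nat.card α) :=
  Nat.card_congr (homPermCongr G (Finite.equivFin α))

theorem card_fixedPointFree_hom (z : G) (α : Type*) [Finite α] :
    Nat.card {φ : G →* Perm α // ∀ a, φ z a ≠ a} = fixedPointFreeHomCount z (Nat.card α) := by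
  refine Nat.card_congr ((homPermCongr G (Finite.equivFin α)).subtypeEquiv fun φ => ?_)
  rw [← (Finite.equivFin α).forall_congr_right]
  simp [homPermCongr]

theorem card_trivial_hom (z : G) (α : Type*) [Finite α] :
    Nat.card {φ : G →* Perm α // φ z = 1} = trivialHomCount z (Nat.card α) := by
  refine Nat.card_congr ((homPermCongr G (Finite.equivFin α)).subtypeEquiv fun φ => ?_)
  exact (MulEquiv.map_eq_one_iff (Finite.equivFin α).permCongrHom).symm

/-- The action of a permutation representation on an invariant set of points. -/
def restrictHom (φ : G →* Perm α) (P : α → Prop) (hP : ∀ g a, P (φ g a) ↔ P a) :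
    G →* Perm {a // P a} where
  toFun g := (φ g).subtypePerm (hP g)
  map_one' := by ext; simp
  map_mul' g h := by ext a; simp only [map_mul]; rfl

theorem coe_restrictHom_apply (φ : G →* Perm α) {P : α → Prop} (hP : ∀ g a, P (φ g a) ↔ P a)
    (g : G) (a : {a // P a}) : (restrictHom φ P hP g a : α) = φ g a := rfl

theorem hom_eq_of_restrictHom_eq {φ ψ : G →* Perm α} {P : α → Prop}
    {hφ : ∀ g a, P (φ g a) ↔ P a} {hψ : ∀ g a, P (ψ g a) ↔ P a}
    (inside : restrictHom φ P hφ = restrictHom ψ P hψ)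
    (outside : restrictHom φ (¬ P ·) (fun g a => (hφ g a).not) =
      restrictHom ψ (¬ P ·) (fun g a => (hψ g a).not)) : φ = ψ := by
  ext g a
  by_cases ha : P a
  · simpa only [coe_restrictHom_apply] using
      congrArg Subtype.val (DFunLike.congr_fun (DFunLike.congr_fun inside g) ⟨a, ha⟩)
  · simpa only [coe_restrictHom_apply] using
      congrArg Subtype.val (DFunLike.congr_fun (DFunLike.congr_fun outside g) ⟨a, ha⟩)

theorem card_le_sum_choose_mul [Fintype α] {X : Type*} [Finite X] {r : Finset α → X → Prop}
    {s : Finset ℕ} {f : ℕ → ℕ} (hr : ∀ x, ∃ A, #A ∈ s ∧ r A x)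
    (hf : ∀ A, #A ∈ s → Nat.card {x // r A x} ≤ f #A) :
    Nat.card X ≤ ∑ k ∈ s, (Fintype.card α).choose k * f k := by
  classical
  calc Nat.card X ≤ Nat.card (Σ A : {A : Finset α // #A ∈ s}, {x // r A x}) := by
        refine Nat.card_le_card_of_surjective (fun t => t.2.1) fun x => ?_
        obtain ⟨A, hA, hx⟩ := hr x
        exact ⟨⟨⟨A, hA⟩, x, hx⟩, rfl⟩
    _ = ∑ A : Finset α with #A ∈ s, Nat.card {x // r A x} := by
        rw [Nat.card_sigma]
        exact (sum_subtype _ (by simp) fun A => Nat.card {x // r A x}).symm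
    _ ≤ ∑ A : Finset α with #A ∈ s, f #A := sum_le_sum fun A hA => hf A (mem_filter.mp hA).2
    _ = ∑ k ∈ s, ∑ A : Finset α with #A ∈ s ∧ #A = k, f #A := by
        simp_rw [← filter_filter]
        exact (sum_fiberwise_of_maps_to (fun A hA => (mem_filter.mp hA).2) _).symm
    _ = ∑ k ∈ s, (Fintype.card α).choose k * f k := by
        refine sum_congr rfl fun k hk => ?_
        have : ({A : Finset α | #A ∈ s ∧ #A = k} : Finset (Finset α)) = powersetCard k univ := by
          ext A
          simp only [mem_filter, mem_univ, true_and, mem_powersetCard, subset_univ]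
          exact ⟨And.right, fun h => ⟨h ▸ hk, h⟩⟩
        rw [this, sum_congr rfl fun A hA => by rw [(mem_powersetCard.mp hA).2], sum_const,
          card_powersetCard, card_univ, smul_eq_mul]

theorem card_notMem [Fintype α] (A : Finset α) : Nat.card {a // a ∉ A} = Fintype.card α - #A := by
  classical
  rw [Nat.card_eq_fintype_card, Fintype.card_subtype_compl, Fintype.card_coe]

theorem transitiveHomCount_le_homCount (G : Type*) [Group G] [Group.FG G] (n : ℕ) :
    transitiveHomCount G n ≤ homCount G n :=
  Nat.card_le_card_of_injective _ Subtype.val_injective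

theorem card_hom_invariant_le [Fintype α] [Group.FG G] (A : Finset α) :
    Nat.card {φ : G →* Perm α // ∀ g a, φ g a ∈ A ↔ a ∈ A} ≤
      homCount G #A * homCount G (Fintype.card α - #A) := by
  have card_mem : Nat.card {a // a ∈ A} = #A := by simp
  rw [← card_notMem A, ← card_hom_perm G {a // a ∉ A}, ← card_mem, ← card_hom_perm G {a // a ∈ A},
    ← Nat.card_prod]
  refine Nat.card_le_card_of_injective (fun φ => (restrictHom φ.1 (· ∈ A) φ.2,
    restrictHom φ.1 (· ∉ A) fun g a => (φ.2 g a).not)) fun φ ψ h => Subtype.ext ?_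
  exact hom_eq_of_restrictHom_eq (Prod.ext_iff.mp h).1 (Prod.ext_iff.mp h).2

theorem exists_proper_invariant_finset {n : ℕ} {φ : G →* Perm (Fin n)}
    (hφ : ¬ ∀ x y, ∃ g, φ g x = y) :
    ∃ A : Finset (Fin n), #A ∈ Ioo 0 n ∧ ∀ g a, φ g a ∈ A ↔ a ∈ A := by
  classical
  push Not at hφ
  obtain ⟨x, y, hxy⟩ := hφ
  let orbit : Finset (Fin n) := {a | ∃ g, φ g x = a}
  have mem_orbit (a : Fin n) : a ∈ orbit ↔ ∃ g, φ g x = a := by simp [orbit]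
  refine ⟨orbit, mem_Ioo.mpr ⟨card_pos.mpr ⟨x, (mem_orbit x).mpr ⟨1, by simp⟩⟩, ?_⟩, fun g a => ?_⟩
  · have y_notMem : y ∉ orbit := fun hy => let ⟨g, hg⟩ := (mem_orbit y).mp hy; hxy g hg
    simpa using card_lt_univ_of_notMem y_notMem
  · rw [mem_orbit, mem_orbit, ← (Equiv.mulLeft g).exists_congr_right]
    simp

theorem homCount_le_transitiveHomCount_add (G : Type*) [Group G] [Group.FG G] (n : ℕ) :
    homCount G n ≤ transitiveHomCount G n +
      ∑ k ∈ Ioo 0 n, n.choose k * (homCount G k * homCount G (n - k)) := by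
  classical
  let transitive (φ : G →* Perm (Fin n)) : Prop := ∀ x y, ∃ g, φ g x = y
  have intransitive_le : Nat.card {φ : G →* Perm (Fin n) // ¬ transitive φ} ≤
      ∑ k ∈ Ioo 0 n, n.choose k * (homCount G k * homCount G (n - k)) := by
    have := card_le_sum_choose_mul (α := Fin n) (X := {φ // ¬ transitive φ})
      (r := fun A φ => ∀ g a, φ.1 g a ∈ A ↔ a ∈ A)
      (f := fun k => homCount G k * homCount G (n - k))
      (fun φ => exists_proper_invariant_finset φ.2) fun A _ => ?_
    · simpa using this
    have restrict_le := card_hom_invariant_le (G := G) A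
    rw [Fintype.card_fin] at restrict_le
    refine (Nat.card_le_card_of_injective (fun φ => ⟨φ.1.1, φ.2⟩) fun φ ψ h => ?_).trans restrict_le
    exact Subtype.ext (Subtype.ext (Subtype.mk.inj h))
  rw [homCount, ← Nat.card_congr (Equiv.sumCompl transitive), Nat.card_sum]
  exact Nat.add_le_add_left intransitive_le _

theorem card_hom_moved_eq_le [Fintype α] [Group.FG G] {z : G} (hz : z ∈ Subgroup.center G)
    (A : Finset α) : Nat.card {φ : G →* Perm α // ∀ a, a ∈ A ↔ φ z a ≠ a} ≤
      fixedPointFreeHomCount z #A * trivialHomCount z (Fintype.card α - #A) := by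
  have card_mem : Nat.card {a // a ∈ A} = #A := by simp
  have invariant (φ : {φ : G →* Perm α // ∀ a, a ∈ A ↔ φ z a ≠ a}) (g : G) (a : α) :
      φ.1 g a ∈ A ↔ a ∈ A := by
    rw [φ.2, φ.2, ← Perm.mul_apply, ← map_mul, ← Subgroup.mem_center_iff.mp hz g, map_mul,
      Perm.mul_apply, (φ.1 g).injective.ne_iff]
  rw [← card_notMem A, ← card_trivial_hom z {a // a ∉ A}, ← card_mem,
    ← card_fixedPointFree_hom z {a // a ∈ A}, ← Nat.card_prod]
  refine Nat.card_le_card_of_injective (fun φ =>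
    (⟨restrictHom φ.1 (· ∈ A) (invariant φ), fun a ha => ?_⟩,
      ⟨restrictHom φ.1 (· ∉ A) fun g a => (invariant φ g a).not, ?_⟩)) fun φ ψ h => Subtype.ext ?_
  · exact (φ.2 a).mp a.2 (congrArg Subtype.val ha)
  · ext a
    exact not_not.mp ((φ.2 a).not.mp a.2)
  · obtain ⟨inside, outside⟩ := Prod.ext_iff.mp h
    exact hom_eq_of_restrictHom_eq (Subtype.ext_iff.mp inside) (Subtype.ext_iff.mp outside)

theorem homCount_le_sum_of_mem_center [Group.FG G] {z : G} (hz : z ∈ Subgroup.center G) (n : ℕ) :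
    homCount G n ≤ ∑ k ∈ range (n + 1),
      n.choose k * (fixedPointFreeHomCount z k * trivialHomCount z (n - k)) := by
  classical
  have := card_le_sum_choose_mul (α := Fin n) (X := G →* Perm (Fin n))
    (r := fun A φ => ∀ a, a ∈ A ↔ φ z a ≠ a) (s := range (n + 1))
    (f := fun k => fixedPointFreeHomCount z k * trivialHomCount z (n - k))
    (fun φ => ?_) fun A _ => ?_
  · simpa only [homCount, Fintype.card_fin] using this
  · refine ⟨({a | φ z a ≠ a} : Finset (Fin n)), mem_range_succ_iff.mpr ?_, by simp⟩
    simpa using card_le_univ ({a | φ z a ≠ a} : Finset (Fin n))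
  · simpa using card_hom_moved_eq_le hz A

end PermutationRepresentations

section Cycles

open Equiv Finset

variable {α β : Type*}

/-- The set of cycles of a permutation, fixed points included. -/
abbrev Cycles (z : Perm α) : Type _ := Quotient (Perm.SameCycle.setoid z)

/-- The number of cycles of a permutation, fixed points included. -/
noncomputable def cycleCount (z : Perm α) : ℕ := Nat.card (Cycles z)

theorem two_mul_cycleCount_le [Finite α] {z : Perm α} (hz : ∀ a, z a ≠ a) :
    2 * cycleCount z ≤ Nat.card α := by
  have mk_out (q : Cycles z) : (⟦q.out⟧ : Cycles z) = q := q.out_eq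
  have mk_apply_out (q : Cycles z) : (⟦z q.out⟧ : Cycles z) = q :=
    (Quotient.sound (Perm.sameCycle_apply_left.mpr (Perm.SameCycle.refl z _))).trans (mk_out q)
  rw [cycleCount, two_mul, ← Nat.card_sum]
  refine Nat.card_le_card_of_injective (Sum.elim Quotient.out fun q => z q.out)
    (Quotient.out_injective.sumElim (fun q r h => ?_) fun q r h => ?_)
  · rw [← mk_apply_out q, ← mk_apply_out r, h]
  · obtain rfl : q = r := by rw [← mk_out q, ← mk_apply_out r, h]
    exact hz _ h.symm

theorem sameCycle_apply_iff_of_commute {x z : Perm α} (h : Commute x z) (a b : α) :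
    z.SameCycle a b ↔ z.SameCycle (x a) (x b) := by
  have conj_eq : x * z * x⁻¹ = z := by rw [h.eq, mul_inv_cancel_right]
  have := Perm.sameCycle_conj (f := z) (g := x) (x := x a) (y := x b)
  rw [conj_eq] at this
  simpa using this.symm

/-- The permutation of the cycles of `z` induced by a permutation commuting with `z`. -/
def cyclesPerm {x z : Perm α} (h : Commute x z) : Perm (Cycles z) :=
  Quotient.congr x (sameCycle_apply_iff_of_commute h)

theorem cyclesPerm_mk {x z : Perm α} (h : Commute x z) (a : α) :
    cyclesPerm h (⟦a⟧ : Cycles z) = ⟦x a⟧ := rfl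

theorem cyclesPerm_pow_mk {x z : Perm α} (h : Commute x z) (k : ℕ) (a : α) :
    (cyclesPerm h ^ k) (⟦a⟧ : Cycles z) = ⟦(x ^ k) a⟧ := by
  induction k with
  | zero => rfl
  | succ k ih => rw [pow_succ', pow_succ', Perm.mul_apply, ih, cyclesPerm_mk, Perm.mul_apply]

theorem cyclesPerm_pow_eq_one {x z : Perm α} {p : ℕ} (hx : x ^ p = z) (h : Commute x z) :
    cyclesPerm h ^ p = 1 := by
  refine Perm.ext fun q => Quotient.inductionOn q fun a => ?_
  rw [cyclesPerm_pow_mk, hx]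
  exact Quotient.sound (Perm.sameCycle_apply_left.mpr (Perm.SameCycle.refl z a))

theorem eq_of_apply_out_eq {x y z : Perm α} (hx : Commute x z) (hy : Commute y z)
    (h : ∀ q : Cycles z, x q.out = y q.out) : x = y := by
  ext a
  obtain ⟨i, hi⟩ : z.SameCycle (⟦a⟧ : Cycles z).out a := Quotient.exact (⟦a⟧ : Cycles z).out_eq
  rw [← hi, ← Perm.mul_apply, ← Perm.mul_apply, (hx.zpow_right i).eq, (hy.zpow_right i).eq,
    Perm.mul_apply, Perm.mul_apply, h]

theorem eq_of_cyclesPerm_eq {x y z : Perm α} (hx : Commute x z) (hy : Commute y z)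
    (hperm : cyclesPerm hx = cyclesPerm hy)
    (hrange : Set.range (fun q : Cycles z => x q.out) = Set.range fun q : Cycles z => y q.out) :
    x = y := by
  refine eq_of_apply_out_eq hx hy fun q => ?_
  obtain ⟨r, hr : y r.out = x q.out⟩ := hrange ▸ Set.mem_range_self q
  have r_eq_q : r = q := by
    refine (cyclesPerm hy).injective ?_
    rw [← r.out_eq, ← q.out_eq, cyclesPerm_mk, hr, ← hperm, cyclesPerm_mk]
  rw [← hr, r_eq_q]

theorem card_roots_le [Finite α] (p : ℕ) (z : Perm α) :
    Nat.card {x : Perm α // x ^ p = z} ≤ 2 ^ Nat.card α * torsionCount p (cycleCount z) := by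
  have commute : ∀ x : {x : Perm α // x ^ p = z}, Commute x.1 z := by
    rintro ⟨x, rfl⟩
    exact Commute.self_pow x p
  have card_set : Nat.card (Set α) = 2 ^ Nat.card α := by
    have := Fintype.ofFinite α
    rw [Nat.card_eq_fintype_card, Nat.card_eq_fintype_card, Fintype.card_set]
  rw [cycleCount, ← card_torsion_perm p (Cycles z), ← card_set, ← Nat.card_prod]
  refine Nat.card_le_card_of_injective (fun x => (Set.range fun q : Cycles z => x.1 q.out,
    ⟨cyclesPerm (commute x), cyclesPerm_pow_eq_one x.2 _⟩)) fun x y h => Subtype.ext ?_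
  obtain ⟨hrange, hperm⟩ := Prod.ext_iff.mp h
  exact eq_of_cyclesPerm_eq (commute x) (commute y) (Subtype.ext_iff.mp hperm) hrange

theorem exists_perm_comp_eq [Fintype α] {f g : α → β}
    (h : univ.val.map f = univ.val.map g) : ∃ σ : Perm α, f ∘ σ = g := by
  classical
  have fiber_equiv (b : β) : Nonempty ({a // g a = b} ≃ {a // f a = b}) := by
    have count_eq := congrArg (Multiset.count b) h
    rw [Multiset.count_map, Multiset.count_map] at count_eq
    rw [← Fintype.card_eq, Fintype.card_subtype, Fintype.card_subtype]
    simpa only [card_def, filter_val, eq_comm] using count_eq.symm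
  let e (b : β) := (fiber_equiv b).some
  exact ⟨Equiv.ofFiberEquiv e, funext (Equiv.ofFiberEquiv_map e)⟩

attribute [local instance] arrowAction

theorem pow_cycleCount_le_card_fixedBy [Finite α] [Finite β] (z : Perm α) :
    Nat.card β ^ cycleCount z ≤ Nat.card (MulAction.fixedBy (α → β) z) := by
  rw [cycleCount, ← Nat.card_fun]
  refine Nat.card_le_card_of_injective (fun f => ⟨fun a => f ⟦a⟧, funext fun a => ?_⟩)
    fun f g h => funext fun q => Quotient.inductionOn q fun a => congrFun (Subtype.mk.inj h) a
  exact congrArg f (Quotient.sound (⟨1, by simp⟩))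

theorem card_orbits_arrow_le (α β : Type*) [Fintype α] [Fintype β] :
    Nat.card (Quotient (MulAction.orbitRel (Perm α) (α → β))) ≤
      (Fintype.card β).multichoose (Fintype.card α) := by
  classical
  rw [← Sym.card_sym_eq_multichoose β (Fintype.card α), ← Nat.card_eq_fintype_card]
  refine Nat.card_le_card_of_injective
    (fun q => (⟨univ.val.map q.out, by simp⟩ : Sym β (Fintype.card α))) fun q r h => ?_
  obtain ⟨σ, hσ⟩ := exists_perm_comp_eq (congrArg Subtype.val h)
  have orbit_rel : MulAction.orbitRel (Perm α) (α → β) r.out q.out :=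
    ⟨σ⁻¹, by rw [← hσ]; rfl⟩
  exact Quotient.out_equiv_out.mp ((MulAction.orbitRel (Perm α) (α → β)).symm orbit_rel)

theorem sum_pow_cycleCount_le (α β : Type*) [Fintype α] [DecidableEq α] [Fintype β] :
    ∑ z : Perm α, Fintype.card β ^ cycleCount z ≤
      (Fintype.card β).multichoose (Fintype.card α) * (Fintype.card α).factorial := by
  classical
  calc ∑ z : Perm α, Fintype.card β ^ cycleCount z
      ≤ ∑ z : Perm α, Fintype.card (MulAction.fixedBy (α → β) z) := by
        refine sum_le_sum fun z _ => ?_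
        simpa only [Nat.card_eq_fintype_card] using pow_cycleCount_le_card_fixedBy (β := β) z
    _ = Fintype.card (Quotient (MulAction.orbitRel (Perm α) (α → β))) * Fintype.card (Perm α) :=
        MulAction.sum_card_fixedBy_eq_card_orbits_mul_card_group _ _
    _ ≤ (Fintype.card β).multichoose (Fintype.card α) * (Fintype.card α).factorial := by
        rw [Fintype.card_perm, ← Nat.card_eq_fintype_card]
        exact Nat.mul_le_mul_right _ (card_orbits_arrow_le α β)

theorem sum_card_pow_cycleCount_le (α : Type*) [Fintype α] [DecidableEq α] :
    ∑ z : Perm α, Fintype.card α ^ cycleCount z ≤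
      4 ^ Fintype.card α * (Fintype.card α).factorial := by
  refine (sum_pow_cycleCount_le α α).trans (Nat.mul_le_mul_right _ ?_)
  calc (Fintype.card α).multichoose (Fintype.card α)
      ≤ 2 ^ (Fintype.card α + Fintype.card α - 1) := by
        rw [Nat.multichoose_eq]
        exact Nat.choose_le_two_pow _ _
    _ ≤ 2 ^ (2 * Fintype.card α) := Nat.pow_le_pow_right two_pos (by lia)
    _ = 4 ^ Fintype.card α := by rw [pow_mul]; norm_num

end Cycles

section CentralElement

open Equiv Finset

variable {G : Type*} [Group G] {z : G}

/-- The exponential-generating-function coefficient `trivialHomCount z n / n!`, against which all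
other counts are compared. -/
noncomputable def trivialHomDensity (z : G) (n : ℕ) : ℝ := trivialHomCount z n / n.factorial

theorem fixedPointFreeHomCount_eq_sum [Group.FG G] (z : G) (n : ℕ) :
    fixedPointFreeHomCount z n = ∑ ζ : Perm (Fin n) with ∀ a, ζ a ≠ a,
      Nat.card {φ : G →* Perm (Fin n) // φ z = ζ} := by
  classical
  have := Fintype.ofFinite (G →* Perm (Fin n))
  rw [fixedPointFreeHomCount, Nat.card_eq_fintype_card, Fintype.card_subtype,
    card_eq_sum_card_fiberwise (f := fun φ => φ z) (t := {ζ | ∀ a, ζ a ≠ a}) (by simp [Set.MapsTo])]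
  refine sum_congr rfl fun ζ hζ => ?_
  rw [Nat.card_eq_fintype_card, Fintype.card_subtype, filter_filter]
  refine congrArg card (filter_congr fun φ _ => and_iff_right_of_imp ?_)
  rintro rfl
  exact (mem_filter.mp hζ).2

theorem trivialHomCount_le_homCount [Group.FG G] (z : G) (n : ℕ) :
    trivialHomCount z n ≤ homCount G n :=
  Nat.card_le_card_of_injective _ Subtype.val_injective

theorem trivialHomDensity_pos [Group.FG G] (z : G) (n : ℕ) : 0 < trivialHomDensity z n := by
  have : Nonempty {φ : G →* Perm (Fin n) // φ z = 1} := ⟨1, rfl⟩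
  exact div_pos (mod_cast Nat.card_pos) (by positivity)

theorem sum_choose_mul_div_factorial {s : Finset ℕ} {n : ℕ} (hs : ∀ k ∈ s, k ≤ n) (f g : ℕ → ℕ) :
    (↑(∑ k ∈ s, n.choose k * (f k * g (n - k))) : ℝ) / n.factorial =
      ∑ k ∈ s, (f k / k.factorial : ℝ) * (g (n - k) / (n - k).factorial) := by
  push_cast
  rw [sum_div]
  refine sum_congr rfl fun k hk => ?_
  rw [Nat.cast_choose ℝ (hs k hk)]
  field_simp

theorem tendsto_homCount_div_transitiveHomCount [Group.FG G] (hz : z ∈ Subgroup.center G)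
    {δ : ℝ} (hδ : 0 < δ) (hratio : Tendsto (fun n : ℕ =>
      trivialHomDensity z (n + 1) / trivialHomDensity z n / (n + 1 : ℝ) ^ δ) atTop (𝓝 1))
    {B : ℝ} (hB : 1 ≤ B)
    (hfree : ∀ n M, (∀ c, 2 * c ≤ n → trivialHomDensity z c ≤ M) →
      fixedPointFreeHomCount z n / n.factorial ≤ B ^ n * M) :
    Tendsto (fun n => (homCount G n / transitiveHomCount G n : ℝ)) atTop (𝓝 1) := by
  have homCount_le (n : ℕ) : (homCount G n / n.factorial : ℝ) ≤
      ∑ k ∈ range (n + 1),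
        (fixedPointFreeHomCount z k / k.factorial) * trivialHomDensity z (n - k) := by
    simp only [trivialHomDensity]
    rw [← sum_choose_mul_div_factorial (by simp)]
    gcongr
    exact homCount_le_sum_of_mem_center hz n
  have homCount_le_transitive_add (n : ℕ) : (homCount G n / n.factorial : ℝ) ≤
      transitiveHomCount G n / n.factorial + ∑ k ∈ Ioo 0 n,
        (homCount G k / k.factorial : ℝ) * (homCount G (n - k) / (n - k).factorial) := by
    rw [← sum_choose_mul_div_factorial fun k hk => (mem_Ioo.mp hk).2.le, ← add_div, ← Nat.cast_add]
    gcongr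
    exact homCount_le_transitiveHomCount_add G n
  have density_tendsto := tendsto_div_of_convolution_bounds (trivialHomDensity_pos z) hδ hratio hB
    hfree (fun n => ?_) homCount_le (fun n => ?_) homCount_le_transitive_add
  · simpa [div_div_div_cancel_right₀, Nat.factorial_ne_zero] using density_tendsto
  · rw [trivialHomDensity]
    gcongr
    exact trivialHomCount_le_homCount z n
  · gcongr
    exact transitiveHomCount_le_homCount G n

end CentralElement

namespace TorusKnotGroup

open Equiv Finset

variable {m : ℕ} {p : Fin m → ℕ}

instance : Group.FG (TorusKnotGroup m p) :=
  Group.fg_iff.mpr ⟨_, PresentedGroup.closure_range_of _, Set.finite_range _⟩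

/-- The common value `x_1 ^ p_1 = ⋯ = x_m ^ p_m` in `Γ_{p_1,…,p_m}`. The index `i` only witnesses
`0 < m`; the element does not depend on it. -/
def centralElement (p : Fin m → ℕ) (i : Fin m) : TorusKnotGroup m p := PresentedGroup.of i ^ p i

theorem of_pow (p : Fin m → ℕ) (i j : Fin m) :
    (PresentedGroup.of j : TorusKnotGroup m p) ^ p j = centralElement p i := by
  have relation : PresentedGroup.mk (torusRels m p)
      (FreeGroup.of j ^ p j * (FreeGroup.of i ^ p i)⁻¹) = 1 :=
    PresentedGroup.one_of_mem ⟨j, i, rfl⟩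
  rwa [map_mul, map_inv, mul_inv_eq_one, map_pow, map_pow] at relation

theorem centralElement_mem_center (p : Fin m → ℕ) (i : Fin m) :
    centralElement p i ∈ Subgroup.center (TorusKnotGroup m p) := by
  rw [← Subgroup.centralizer_univ, ← Subgroup.coe_top, ← PresentedGroup.closure_range_of,
    Subgroup.centralizer_closure]
  rintro _ ⟨j, rfl⟩
  rw [← of_pow p i j]
  exact (Commute.self_pow _ _).eq

/-- Homomorphisms out of `Γ` with a prescribed value `ζ` at the central element are families of
roots of `ζ`. -/
def homEquivRoots {H : Type*} [Group H] (p : Fin m → ℕ) (i : Fin m) (ζ : H) :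
    {φ : TorusKnotGroup m p →* H // φ (centralElement p i) = ζ} ≃
      ∀ j, {x : H // x ^ p j = ζ} where
  toFun φ j := ⟨φ.1 (PresentedGroup.of j), by rw [← map_pow, of_pow p i, φ.2]⟩
  invFun x := ⟨PresentedGroup.toGroup (f := fun j => (x j : H)) (by
    rintro _ ⟨j, k, rfl⟩
    simp [(x j).2, (x k).2]), by simp [centralElement, (x i).2]⟩
  left_inv φ := Subtype.ext (PresentedGroup.ext fun j => by simp)
  right_inv x := by simp

theorem card_hom_apply_centralElement_eq {H : Type*} [Group H] (p : Fin m → ℕ) (i : Fin m) (ζ : H) :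
    Nat.card {φ : TorusKnotGroup m p →* H // φ (centralElement p i) = ζ} =
      ∏ j, Nat.card {x : H // x ^ p j = ζ} := by
  rw [Nat.card_congr (homEquivRoots p i ζ), Nat.card_pi]

theorem trivialHomCount_centralElement (p : Fin m → ℕ) (i : Fin m) (n : ℕ) :
    trivialHomCount (centralElement p i) n =
      ∏ j, torsionCount (p j) n := by
  rw [trivialHomCount, card_hom_apply_centralElement_eq]
  exact prod_congr rfl fun j _ => by rw [card_torsion_perm, Nat.card_fin]

theorem trivialHomDensity_succ_div (p : Fin m → ℕ) (i : Fin m) (n : ℕ) :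
    trivialHomDensity (centralElement p i) (n + 1) / trivialHomDensity (centralElement p i) n =
      (n + 1 : ℝ) ^ m / (n + 1) / ∏ j, torsionRatio (p j) n := by
  have torsionCount_prod_pos : 0 < ∏ j, (torsionCount (p j) n : ℝ) :=
    prod_pos fun j _ => mod_cast torsionCount_pos (p j) n
  have torsionRatio_prod_pos : 0 < ∏ j, torsionRatio (p j) n :=
    prod_pos fun j _ => torsionRatio_pos (p j) n
  simp only [trivialHomDensity, trivialHomCount_centralElement, Nat.cast_prod, torsionCount_succ,
    prod_mul_distrib, prod_div_distrib, prod_const, card_univ, Fintype.card_fin,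
    Nat.factorial_succ, Nat.cast_mul, Nat.cast_succ]
  field_simp

theorem tendsto_trivialHomDensity_ratio (hp : ∀ j, p j ≠ 0) (i : Fin m) :
    Tendsto (fun n : ℕ => trivialHomDensity (centralElement p i) (n + 1) /
      trivialHomDensity (centralElement p i) n / (n + 1 : ℝ) ^ (m - 1 - ∑ j, 1 / (p j : ℝ)))
        atTop (𝓝 1) := by
  have prod_tendsto : Tendsto
      (fun n : ℕ => (∏ j, torsionRatio (p j) n / (n + 1 : ℝ) ^ (1 / p j : ℝ))⁻¹) atTop (𝓝 1) := by
    simpa using (tendsto_finsetProd univ fun j _ =>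
      tendsto_torsionRatio_div_rpow (hp j)).inv₀ (by simp)
  refine prod_tendsto.congr fun n => ?_
  have n_succ_pos : (0 : ℝ) < n + 1 := by positivity
  rw [trivialHomDensity_succ_div, Real.rpow_sub n_succ_pos, Real.rpow_sub n_succ_pos,
    Real.rpow_natCast, Real.rpow_one, Real.rpow_sum_of_pos n_succ_pos, prod_div_distrib]
  field_simp

theorem card_hom_apply_centralElement_eq_le {n : ℕ} {ζ : Perm (Fin n)} (hζ : ∀ a, ζ a ≠ a)
    (i : Fin m) {M : ℝ} (hM : ∀ c, 2 * c ≤ n → trivialHomDensity (centralElement p i) c ≤ M) :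
    (Nat.card {φ : TorusKnotGroup m p →* Perm (Fin n) // φ (centralElement p i) = ζ} : ℝ) ≤
      (2 ^ m) ^ n * M * n ^ cycleCount ζ := by
  have two_mul_le : 2 * cycleCount ζ ≤ n := by simpa using two_mul_cycleCount_le hζ
  have factorial_le : (cycleCount ζ).factorial ≤ n ^ cycleCount ζ :=
    (Nat.factorial_le_pow _).trans (Nat.pow_le_pow_left (by lia) _)
  have M_nonneg : 0 ≤ M := (trivialHomDensity_pos _ 0).le.trans (hM 0 (Nat.zero_le n))
  calc (Nat.card {φ : TorusKnotGroup m p →* Perm (Fin n) // φ (centralElement p i) = ζ} : ℝ)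
      ≤ ∏ j, (2 ^ n * torsionCount (p j) (cycleCount ζ)) := by
        rw [card_hom_apply_centralElement_eq]
        exact mod_cast prod_le_prod' fun j _ => by simpa using card_roots_le (p j) ζ
    _ = (2 ^ m) ^ n * trivialHomCount (centralElement p i) (cycleCount ζ) := by
        rw [prod_mul_distrib, prod_const, card_univ, Fintype.card_fin, pow_right_comm,
          trivialHomCount_centralElement]
        push_cast
        rfl
    _ ≤ (2 ^ m) ^ n * (M * (cycleCount ζ).factorial) := by
        gcongr
        exact (div_le_iff₀ (by positivity)).mp (hM _ two_mul_le)
    _ ≤ (2 ^ m) ^ n * (M * n ^ cycleCount ζ) := by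
        gcongr
        exact mod_cast factorial_le
    _ = (2 ^ m) ^ n * M * n ^ cycleCount ζ := (mul_assoc _ _ _).symm

theorem fixedPointFreeHomCount_div_factorial_le {n : ℕ} (i : Fin m) {M : ℝ}
    (hM : ∀ c, 2 * c ≤ n → trivialHomDensity (centralElement p i) c ≤ M) :
    (fixedPointFreeHomCount (centralElement p i) n / n.factorial : ℝ) ≤ (2 ^ m * 4) ^ n * M := by
  have M_nonneg : 0 ≤ M := (trivialHomDensity_pos _ 0).le.trans (hM 0 (Nat.zero_le n))
  rw [div_le_iff₀ (by positivity), fixedPointFreeHomCount_eq_sum, Nat.cast_sum]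
  calc _ ≤ ∑ ζ : Perm (Fin n) with ∀ a, ζ a ≠ a, (2 ^ m) ^ n * M * (n : ℝ) ^ cycleCount ζ :=
        sum_le_sum fun ζ hζ => card_hom_apply_centralElement_eq_le (mem_filter.mp hζ).2 i hM
    _ ≤ ∑ ζ : Perm (Fin n), (2 ^ m) ^ n * M * (n : ℝ) ^ cycleCount ζ :=
        sum_le_univ_sum_of_nonneg fun ζ => by positivity
    _ ≤ (2 ^ m) ^ n * M * (4 ^ n * n.factorial) := by
        rw [← mul_sum]
        gcongr
        simpa using Nat.cast_le (α := ℝ).mpr (sum_card_pow_cycleCount_le (Fin n))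
    _ = (2 ^ m * 4) ^ n * M * n.factorial := by rw [mul_pow]; ring

end TorusKnotGroup

theorem hom_count_transitive_comparison (m : ℕ) (p : Fin m → ℕ) (hp : ∀ i, 2 ≤ p i)
    (h : ∑ i, (1 : ℝ) / (p i : ℝ) < (m : ℝ) - 1) :
    Filter.Tendsto (fun n : ℕ =>
      (Nat.card (TorusKnotGroup m p →* Equiv.Perm (Fin n)) : ℝ) /
        (transitiveHomCount (TorusKnotGroup m p) n : ℝ))
      Filter.atTop (𝓝 1) := by
  have m_pos : 0 < m := by
    by_contra! m_le
    obtain rfl : m = 0 := by lia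
    norm_num at h
  have one_le : (1 : ℝ) ≤ 2 ^ m * 4 := by
    have : (1 : ℝ) ≤ 2 ^ m := one_le_pow₀ one_le_two
    linarith
  let i : Fin m := ⟨0, m_pos⟩
  exact tendsto_homCount_div_transitiveHomCount (TorusKnotGroup.centralElement_mem_center p i)
    (sub_pos.mpr h)
    (TorusKnotGroup.tendsto_trivialHomDensity_ratio (fun j => by have := hp j; lia) i) one_le
    fun n M => TorusKnotGroup.fixedPointFreeHomCount_div_factorial_le i
end
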